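/- arXiv:1703.08830 — 9 statements merged into one kernel-verified Lean document; each statement's English description precedes it below -/
import Mathlib

section
/- Let m be a positive integer and let (α|β) be a pair of compositions with |α| + |β| = n. Then in the ring Γ^(m) of m'-truncated symmetric functions we have h_α e_β = ∑ c^(m)_{β;(ξ,mμ)} h_{α∪ξ} e_{mμ}, where the sum runs over all pairs (ξ, μ) of partitions with |α| + |ξ| + m|μ| = n, and where e_{mμ} = e_{mμ_1}···e_{mμ_{ℓ(μ)}}. -/
noncomputable section

open MvPolynomial

/-- The polynomial ring `ℤ[h_1, h_2, …, e_1, e_2, …]`: `Sum.inl i` is `h_i`, `Sum.inr j` is `e_j`. -/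
abbrev SymR : Type := MvPolynomial (ℕ ⊕ ℕ) ℤ

/-- `h_i`, with the convention `h_0 = 1`. -/
def Hh (i : ℕ) : SymR := if i = 0 then 1 else X (Sum.inl i)

/-- `e_j`, with the convention `e_0 = 1`. -/
def Ee (j : ℕ) : SymR := if j = 0 then 1 else X (Sum.inr j)

/-- `∑_{i=0}^d (-1)^i h_i e_{d-i}`. -/
def truncRel (d : ℕ) : SymR := ∑ i ∈ Finset.range (d + 1), (-1 : SymR) ^ i * Hh i * Ee (d - i)

/-- The ideal generated by `∑_{i=0}^d (-1)^i h_i e_{d-i}` for all `d ≥ 1` with `m ∤ d`. -/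
def truncIdeal (m : ℕ) : Ideal SymR := Ideal.span {f | ∃ d : ℕ, 0 < d ∧ ¬ m ∣ d ∧ f = truncRel d}

/-- The `m`'-truncated ring `Γ^(m)`. -/
abbrev Gamma (m : ℕ) := SymR ⧸ truncIdeal m

/-- Quotient map `R → Γ^(m)`. -/
def gmk (m : ℕ) : SymR →+* Gamma m := Ideal.Quotient.mk _

/-- `h_α = h_{α_1} ⋯ h_{α_ℓ}` for a finite sequence `α`. -/
def hprod (l : List ℕ) : SymR := (l.map Hh).prod

/-- `e_α = e_{α_1} ⋯ e_{α_ℓ}` for a finite sequence `α`. -/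
def eprod (l : List ℕ) : SymR := (l.map Ee).prod

/-- A partition: a weakly decreasing finite sequence of positive integers. -/
def IsPartitionL (l : List ℕ) : Prop := l.Pairwise (· ≥ ·) ∧ ∀ x ∈ l, 0 < x

/-- `c_λ`: the number of compositions of type `λ` (distinct rearrangements of `λ`). -/
def numComp (l : List ℕ) : ℕ := l.permutations.dedup.length

/-- `c_λ^(m)`: the number of compositions of type `λ` all of whose partial sums are
not divisible by `m`. -/
def numCompM (m : ℕ) (l : List ℕ) : ℕ :=
  (l.permutations.dedup.filter fun δ => decide (∀ j < δ.length, ¬ m ∣ (δ.take (j + 1)).sum)).length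

/-- `ε_λ = (-1)^(|λ|-ℓ(λ))`. -/
def epsL (l : List ℕ) : ℤ := (-1) ^ (l.sum - l.length)

/-- `μ ∈ P(n;m)`: `μ` is a partition with `|μ| ≤ n` and `m ∣ n - |μ|`. -/
def MemPnm (n m : ℕ) (μ : List ℕ) : Prop := IsPartitionL μ ∧ μ.sum ≤ n ∧ m ∣ (n - μ.sum)

/-- Membership of the tuple `L = (ξ^(1), …, ξ^(s))` in `V(β;(ξ,mμ))`. -/
def Vmem (m : ℕ) (β ξ μ : List ℕ) (L : List (List ℕ)) : Prop :=
  L.length = β.length ∧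
  (∀ i < β.length, MemPnm (β.getD i 0) m (L.getD i [])) ∧
  List.Perm L.flatten ξ ∧
  List.Perm (((List.range β.length).map fun i => β.getD i 0 - (L.getD i []).sum).filter
      fun x => decide (x ≠ 0)) (μ.map (m * ·))

/-- `c^(m)_{β;(ξ,mμ)} = ∑_{(ξ^(1),…,ξ^(s)) ∈ V(β;(ξ,mμ))} ∏_i ε_{ξ^(i)} c^(m)_{ξ^(i)}`. -/
def cB (m : ℕ) (β ξ μ : List ℕ) : ℤ :=
  ∑ᶠ L ∈ {L : List (List ℕ) | Vmem m β ξ μ L},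
    ∏ i ∈ Finset.range β.length, epsL (L.getD i []) * (numCompM m (L.getD i []) : ℤ)

/-- The weakly decreasing rearrangement of a finite sequence: `α∪ξ = sortDesc (α ++ ξ)`. -/
def sortDesc (l : List ℕ) : List ℕ := (Multiset.sort (l : Multiset ℕ) (· ≤ ·)).reverse

/-!
When `m ∤ n`, the relation of degree `n` expresses `e_n` through products `h_i e_{n-i}`, `i > 0`.
Iterating until the index of `e` is divisible by `m` removes a sequence of indices of `h`; read from
the last removed to the first, it is a composition `δ` with `|δ| ≡ n` mod `m`, none of whose partial
sums is divisible by `m`, since otherwise the iteration would have stopped earlier. Collecting the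
compositions of the same type gives `e_n = ∑_{λ ∈ P(n;m)} ε_λ c_λ^(m) h_λ e_{n-|λ|}`. Multiplying
these expansions over the parts of `β` gives a sum over tuples of partitions, which is then grouped
by the pair `(ξ, μ)`.
-/

open Finset.HasAntidiagonal (antidiagonal mem_antidiagonal)

theorem perm_sortDesc (l : List ℕ) : (sortDesc l).Perm l :=
  (List.reverse_perm _).trans (Multiset.coe_eq_coe.1 (Multiset.sort_eq _ _))

theorem pairwise_sortDesc (l : List ℕ) : (sortDesc l).Pairwise (· ≥ ·) :=
  List.pairwise_reverse.2 (Multiset.pairwise_sort _ _)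

theorem isPartitionL_sortDesc {l : List ℕ} (hl : ∀ x ∈ l, 0 < x) : IsPartitionL (sortDesc l) :=
  ⟨pairwise_sortDesc l, fun x hx => hl x ((perm_sortDesc l).mem_iff.1 hx)⟩

theorem sortDesc_eq_iff_perm {l l' : List ℕ} (hl' : l'.Pairwise (· ≥ ·)) :
    sortDesc l = l' ↔ l.Perm l' := by
  refine ⟨fun h => h ▸ (perm_sortDesc l).symm, fun h => ?_⟩
  exact ((perm_sortDesc l).trans h).eq_of_pairwise (fun _ _ _ _ hab hba => le_antisymm hba hab)
    (pairwise_sortDesc l) hl'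

theorem epsL_eq_of_perm {l l' : List ℕ} (h : l.Perm l') : epsL l = epsL l' := by
  rw [epsL, epsL, h.sum_eq, h.length_eq]

theorem epsL_append_succ {l : List ℕ} (hl : ∀ x ∈ l, 0 < x) (i : ℕ) :
    epsL (l ++ [i + 1]) = epsL l * (-1) ^ i := by
  have hlen : l.length ≤ l.sum := l.length_le_sum_of_one_le hl
  rw [epsL, epsL, ← pow_add]
  congr 1
  simp only [List.sum_append, List.sum_singleton, List.length_append, List.length_singleton]
  omega

@[to_additive]
theorem prod_map_filter_ne_zero {ι M : Type*} [Zero ι] [DecidableEq ι] [Monoid M] (f : ι → M)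
    (hf : f 0 = 1) (l : List ι) :
    ((l.filter fun x => decide (x ≠ 0)).map f).prod = (l.map f).prod := by
  induction l with
  | nil => rfl
  | cons a l ih =>
    by_cases ha : a = 0
    · simpa [ha, hf] using ih
    · simpa [ha] using congrArg (f a * ·) ih

theorem finite_setOf_pos_sum_le (n : ℕ) :
    {l : List ℕ | (∀ x ∈ l, 0 < x) ∧ l.sum ≤ n}.Finite := by
  refine (Set.finite_iUnion fun k : Fin (n + 1) =>
    Set.finite_range fun c : Composition k => c.blocks).subset ?_
  rintro l ⟨hpos, hsum⟩
  exact Set.mem_iUnion.2 ⟨⟨l.sum, Nat.lt_succ_of_le hsum⟩, ⟨l, fun {i} hi => hpos i hi, rfl⟩, rfl⟩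

theorem finite_setOf_isPartitionL_pair {m : ℕ} (hm : 0 < m) (a n : ℕ) :
    {q : List ℕ × List ℕ |
      IsPartitionL q.1 ∧ IsPartitionL q.2 ∧ a + q.1.sum + m * q.2.sum = n}.Finite := by
  refine ((finite_setOf_pos_sum_le n).prod (finite_setOf_pos_sum_le n)).subset ?_
  rintro ⟨ξ, μ⟩ ⟨hξ, hμ, hsum⟩
  dsimp only at hξ hμ hsum
  have hle : μ.sum ≤ m * μ.sum := Nat.le_mul_of_pos_left _ hm
  exact ⟨⟨hξ.2, show ξ.sum ≤ n by omega⟩, ⟨hμ.2, show μ.sum ≤ n by omega⟩⟩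

/-- No nonempty initial segment of `δ` has sum divisible by `m`; this is the condition counted by
`numCompM`. -/
def PartialSumsNotDvd (m : ℕ) (δ : List ℕ) : Prop :=
  ∀ j < δ.length, ¬ m ∣ (δ.take (j + 1)).sum

theorem partialSumsNotDvd_append_singleton {m : ℕ} {δ : List ℕ} {a : ℕ} :
    PartialSumsNotDvd m (δ ++ [a]) ↔ PartialSumsNotDvd m δ ∧ ¬ m ∣ δ.sum + a := by
  have take_init {j : ℕ} (hj : j < δ.length) : (δ ++ [a]).take (j + 1) = δ.take (j + 1) :=
    List.take_append_of_le_length hj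
  have take_all : (δ ++ [a]).take (δ.length + 1) = δ ++ [a] := List.take_of_length_le (by simp)
  simp only [PartialSumsNotDvd, List.length_append, List.length_singleton, Nat.forall_lt_succ_right,
    take_all, List.sum_append, List.sum_singleton]
  exact and_congr_left' (forall₂_congr fun j hj => by rw [take_init hj])

/-- The compositions `δ` with `|δ| ≤ n` and `m ∣ n - |δ|`, none of whose partial sums is divisible
by `m`: the index set of the expansion of `e_n` before rearranging into partitions. -/
def admissibleCompositions (m n : ℕ) : Finset (List ℕ) :=
  ((finite_setOf_pos_sum_le n).subset (Set.sep_subset _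
    fun δ => m ∣ n - δ.sum ∧ PartialSumsNotDvd m δ)).toFinset

theorem mem_admissibleCompositions {m n : ℕ} {δ : List ℕ} :
    δ ∈ admissibleCompositions m n ↔
      ((∀ x ∈ δ, 0 < x) ∧ δ.sum ≤ n) ∧ m ∣ n - δ.sum ∧ PartialSumsNotDvd m δ :=
  Set.Finite.mem_toFinset _

theorem nil_mem_admissibleCompositions {m n : ℕ} : [] ∈ admissibleCompositions m n ↔ m ∣ n := by
  simp [mem_admissibleCompositions, PartialSumsNotDvd]

theorem admissibleCompositions_of_dvd {m n : ℕ} (h : m ∣ n) :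
    admissibleCompositions m n = {[]} := by
  refine Finset.eq_singleton_iff_unique_mem.2 ⟨nil_mem_admissibleCompositions.2 h, fun δ hδ => ?_⟩
  obtain ⟨⟨-, hle⟩, hdvd, hδ⟩ := mem_admissibleCompositions.1 hδ
  obtain rfl | ⟨δ, a, rfl⟩ := List.eq_nil_or_concat' δ
  · rfl
  · have hsum : m ∣ (δ ++ [a]).sum := (Nat.dvd_sub_iff_right hle h).1 hdvd
    exact absurd (by simpa using hsum) (partialSumsNotDvd_append_singleton.1 hδ).2

theorem append_succ_mem_admissibleCompositions {m i j : ℕ} (h : ¬ m ∣ i + j + 1) {δ : List ℕ} :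
    δ ++ [i + 1] ∈ admissibleCompositions m (i + j + 1) ↔ δ ∈ admissibleCompositions m j := by
  have hsub : i + j + 1 - (δ.sum + (i + 1)) = j - δ.sum := by omega
  have hle : δ.sum + (i + 1) ≤ i + j + 1 ↔ δ.sum ≤ j := by omega
  have last_not_dvd (hj : δ.sum ≤ j) (hdvd : m ∣ j - δ.sum) : ¬ m ∣ δ.sum + (i + 1) := fun hlast =>
    h (by rw [show i + j + 1 = j - δ.sum + (δ.sum + (i + 1)) by omega]; exact hdvd.add hlast)
  simp only [mem_admissibleCompositions, partialSumsNotDvd_append_singleton, List.sum_append,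
    List.sum_singleton, hsub, hle, List.forall_mem_append, List.forall_mem_singleton, Nat.succ_pos,
    and_true]
  tauto

theorem sum_admissibleCompositions_succ {A : Type*} [AddCommMonoid A] {m n : ℕ}
    (h : ¬ m ∣ n + 1) (f : List ℕ → A) :
    ∑ δ ∈ admissibleCompositions m (n + 1), f δ =
      ∑ p ∈ antidiagonal n, ∑ δ ∈ admissibleCompositions m p.2, f (δ ++ [p.1 + 1]) := by
  have mem_iff {i j : ℕ} (hij : i + j = n) {δ : List ℕ} :
      δ ++ [i + 1] ∈ admissibleCompositions m (n + 1) ↔ δ ∈ admissibleCompositions m j := by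
    subst hij
    exact append_succ_mem_admissibleCompositions h
  rw [Finset.sum_sigma']
  symm
  refine Finset.sum_bij (fun x _ => x.2 ++ [x.1.1 + 1]) ?_ ?_ ?_ fun _ _ => rfl
  · rintro ⟨p, δ⟩ hx
    obtain ⟨hp, hδ⟩ := Finset.mem_sigma.1 hx
    exact (mem_iff (mem_antidiagonal.1 hp)).2 hδ
  · rintro ⟨⟨i, j⟩, δ⟩ hx ⟨⟨i', j'⟩, δ'⟩ hx' heq
    have hij := mem_antidiagonal.1 (Finset.mem_sigma.1 hx).1
    have hij' := mem_antidiagonal.1 (Finset.mem_sigma.1 hx').1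
    obtain ⟨rfl, hlast⟩ := List.append_inj' heq rfl
    obtain rfl : i = i' := by simpa using hlast
    obtain rfl : j = j' := Nat.add_left_cancel (hij.trans hij'.symm)
    rfl
  · intro δ hδ
    obtain rfl | ⟨δ, a, rfl⟩ := List.eq_nil_or_concat' δ
    · exact absurd (nil_mem_admissibleCompositions.1 hδ) h
    · obtain ⟨⟨hpos, hle⟩, -⟩ := mem_admissibleCompositions.1 hδ
      have ha : 0 < a := hpos a (by simp)
      have han : a ≤ n + 1 := le_trans (by simp) hle
      obtain ⟨i, rfl⟩ := Nat.exists_eq_add_one.2 ha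
      have hi : i + (n - i) = n := by omega
      exact ⟨⟨(i, n - i), δ⟩, Finset.mem_sigma.2
        ⟨mem_antidiagonal.2 hi, (mem_iff hi).1 hδ⟩, rfl⟩

/-- The set `P(n;m)` as a finset. -/
def congruentPartitions (m n : ℕ) : Finset (List ℕ) :=
  ((finite_setOf_pos_sum_le n).subset fun l (hl : MemPnm n m l) => ⟨hl.1.2, hl.2.1⟩).toFinset

theorem mem_congruentPartitions {m n : ℕ} {l : List ℕ} :
    l ∈ congruentPartitions m n ↔ MemPnm n m l :=
  Set.Finite.mem_toFinset _

theorem sortDesc_mem_congruentPartitions {m n : ℕ} {δ : List ℕ}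
    (hδ : δ ∈ admissibleCompositions m n) : sortDesc δ ∈ congruentPartitions m n := by
  obtain ⟨⟨hpos, hle⟩, hdvd, -⟩ := mem_admissibleCompositions.1 hδ
  rw [mem_congruentPartitions, MemPnm, (perm_sortDesc δ).sum_eq]
  exact ⟨isPartitionL_sortDesc hpos, hle, hdvd⟩

theorem card_admissibleCompositions_sortDesc_eq {m n : ℕ} {l : List ℕ} (hl : MemPnm n m l) :
    ({δ ∈ admissibleCompositions m n | sortDesc δ = l} : Finset _).card = numCompM m l := by
  rw [numCompM, ← List.toFinset_card_of_nodup ((List.nodup_dedup _).filter _)]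
  congr 1
  ext δ
  simp only [Finset.mem_filter, mem_admissibleCompositions, List.mem_toFinset, List.mem_filter,
    List.mem_dedup, List.mem_permutations, decide_eq_true_eq, sortDesc_eq_iff_perm hl.1.1]
  constructor
  · rintro ⟨⟨-, -, hδ⟩, hperm⟩
    exact ⟨hperm, hδ⟩
  · rintro ⟨hperm, hδ⟩
    rw [hperm.sum_eq]
    exact ⟨⟨⟨fun x hx => hl.1.2 x (hperm.mem_iff.1 hx), hl.2.1⟩, hl.2.2, hδ⟩, hperm⟩

/-- The factor `ε_λ c_λ^(m)`, the coefficient of `h_λ e_{n-|λ|}` in the expansion of `e_n`. -/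
def signedNumCompM (m : ℕ) (l : List ℕ) : ℤ := epsL l * (numCompM m l : ℤ)

/-- The tuples `(ξ^(1), …, ξ^(s))` of partitions with `ξ^(i) ∈ P(β_i;m)`. -/
def partitionTuples (m : ℕ) (β : List ℕ) : Finset (Fin β.length → List ℕ) :=
  Fintype.piFinset fun i => congruentPartitions m β[i]

/-- The sequence `(β_1 - |ξ^(1)|, …, β_s - |ξ^(s)|)`; no subtraction truncates when `p` is in
`partitionTuples m β`. -/
def remainders (β : List ℕ) (p : Fin β.length → List ℕ) : List ℕ :=
  List.ofFn fun i => β[i] - (p i).sum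

/-- The pair `(ξ, μ)` for which the tuple `p` belongs to `V(β;(ξ,mμ))`. -/
def tupleType (m : ℕ) (β : List ℕ) (p : Fin β.length → List ℕ) : List ℕ × List ℕ :=
  (sortDesc (List.ofFn p).flatten,
    sortDesc (((remainders β p).filter fun x => decide (x ≠ 0)).map (· / m)))

section PartitionTuples

variable {m : ℕ} {β : List ℕ} {p : Fin β.length → List ℕ}

theorem mem_partitionTuples : p ∈ partitionTuples m β ↔ ∀ i, MemPnm β[i] m (p i) := by
  simp only [partitionTuples, Fintype.mem_piFinset, mem_congruentPartitions]

theorem pos_of_mem_flatten_ofFn (hp : p ∈ partitionTuples m β) :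
    ∀ x ∈ (List.ofFn p).flatten, 0 < x := by
  simp only [List.mem_flatten, List.mem_ofFn]
  rintro x ⟨-, ⟨i, rfl⟩, hx⟩
  exact (mem_partitionTuples.1 hp i).1.2 x hx

theorem dvd_of_mem_remainders (hp : p ∈ partitionTuples m β) : ∀ x ∈ remainders β p, m ∣ x := by
  simp only [remainders, List.mem_ofFn]
  rintro - ⟨i, rfl⟩
  exact (mem_partitionTuples.1 hp i).2.2

theorem sum_flatten_add_sum_remainders (hp : p ∈ partitionTuples m β) :
    (List.ofFn p).flatten.sum + (remainders β p).sum = β.sum := by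
  rw [List.sum_flatten, List.map_ofFn, List.sum_ofFn, remainders, List.sum_ofFn,
    ← Finset.sum_add_distrib, ← Fin.sum_univ_getElem β]
  exact Finset.sum_congr rfl fun i _ => Nat.add_sub_of_le (mem_partitionTuples.1 hp i).2.1

theorem map_mul_tupleType_perm (hp : p ∈ partitionTuples m β) :
    ((tupleType m β p).2.map (m * ·)).Perm
      ((remainders β p).filter fun x => decide (x ≠ 0)) := by
  refine ((perm_sortDesc _).map _).trans (List.Perm.of_eq ?_)
  rw [List.map_map]
  refine (List.map_congr_left fun x hx => ?_).trans (List.map_id _)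
  exact Nat.mul_div_cancel' (dvd_of_mem_remainders hp x (List.mem_of_mem_filter hx))

theorem isPartitionL_tupleType_fst (hp : p ∈ partitionTuples m β) :
    IsPartitionL (tupleType m β p).1 :=
  isPartitionL_sortDesc (pos_of_mem_flatten_ofFn hp)

theorem isPartitionL_tupleType_snd (hp : p ∈ partitionTuples m β) :
    IsPartitionL (tupleType m β p).2 := by
  refine isPartitionL_sortDesc fun x hx => ?_
  obtain ⟨y, hy, rfl⟩ := List.mem_map.1 hx
  obtain ⟨hmem, hne⟩ := List.mem_filter.1 hy
  have hdvd : m ∣ y := dvd_of_mem_remainders hp y hmem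
  have hpos : 0 < y := Nat.pos_of_ne_zero (of_decide_eq_true hne)
  exact Nat.div_pos (Nat.le_of_dvd hpos hdvd) (Nat.pos_of_dvd_of_pos hdvd hpos)

theorem sum_tupleType (hp : p ∈ partitionTuples m β) :
    (tupleType m β p).1.sum + m * (tupleType m β p).2.sum = β.sum := by
  have hfst : (tupleType m β p).1.sum = (List.ofFn p).flatten.sum := (perm_sortDesc _).sum_eq
  have hsnd : m * (tupleType m β p).2.sum = (remainders β p).sum := by
    calc m * (tupleType m β p).2.sum = ((tupleType m β p).2.map (m * ·)).sum := by
          simpa using (List.sum_map_mul_left (tupleType m β p).2 id m).symm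
      _ = ((remainders β p).filter fun x => decide (x ≠ 0)).sum :=
          (map_mul_tupleType_perm hp).sum_eq
      _ = (remainders β p).sum := by
          simpa using sum_map_filter_ne_zero id rfl (remainders β p)
  rw [hfst, hsnd, sum_flatten_add_sum_remainders hp]

theorem vmem_ofFn_iff (hm : 0 < m) {ξ μ : List ℕ} (hξ : ξ.Pairwise (· ≥ ·))
    (hμ : μ.Pairwise (· ≥ ·)) :
    Vmem m β ξ μ (List.ofFn p) ↔ p ∈ partitionTuples m β ∧ tupleType m β p = (ξ, μ) := by
  have hrem : ((List.range β.length).map fun i => β.getD i 0 - ((List.ofFn p).getD i []).sum) =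
      remainders β p := by
    refine List.ext_getElem (by simp [remainders]) fun i hi _ => ?_
    have hi : i < β.length := by simpa using hi
    simp [remainders, hi]
  have hmem : (∀ i < β.length, MemPnm (β.getD i 0) m ((List.ofFn p).getD i [])) ↔
      p ∈ partitionTuples m β := by
    rw [mem_partitionTuples, Fin.forall_iff]
    exact forall₂_congr fun i hi => by simp [hi]
  rw [Vmem, hrem, hmem, Prod.ext_iff]
  simp only [List.length_ofFn, true_and]
  refine and_congr_right fun hp => and_congr (sortDesc_eq_iff_perm hξ).symm ?_
  rw [← (map_mul_tupleType_perm hp).congr_left,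
    List.map_perm_map_iff (mul_right_injective₀ hm.ne'), tupleType, sortDesc_eq_iff_perm hμ,
    (perm_sortDesc _).congr_left]

theorem cB_eq_sum_partitionTuples (hm : 0 < m) {ξ μ : List ℕ} (hξ : ξ.Pairwise (· ≥ ·))
    (hμ : μ.Pairwise (· ≥ ·)) :
    cB m β ξ μ = ∑ p ∈ partitionTuples m β with tupleType m β p = (ξ, μ),
      ∏ i, signedNumCompM m (p i) := by
  have hset : {L | Vmem m β ξ μ L} =
      (({p ∈ partitionTuples m β | tupleType m β p = (ξ, μ)}.image List.ofFn : Finset _) :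
        Set (List (List ℕ))) := by
    ext L
    simp only [Finset.coe_image, Set.mem_image, Finset.mem_coe, Finset.mem_filter,
      ← vmem_ofFn_iff hm hξ hμ, Set.mem_ofPred_eq]
    refine ⟨fun hL => ?_, fun ⟨_, hp, hpL⟩ => hpL ▸ hp⟩
    obtain ⟨p, rfl⟩ : ∃ p : Fin β.length → List ℕ, List.ofFn p = L :=
      hL.1 ▸ ⟨L.get, List.ofFn_get L⟩
    exact ⟨p, hL, rfl⟩
  rw [cB, hset, finsum_mem_coe_finset, Finset.sum_image List.ofFn_injective.injOn]
  refine Finset.sum_congr rfl fun p _ => ?_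
  rw [Finset.prod_range]
  simp [signedNumCompM]

end PartitionTuples

/-- Sequences `h`, `e` in a commutative ring satisfying the defining relations of `Γ^(m)`, that is,
images of `(h_i)` and `(e_j)` under a ring homomorphism out of `Γ^(m)`. For a sequence `l`, the
monomials `h_l` and `e_l` are written `(l.map h).prod` and `(l.map e).prod`. -/
structure IsTruncatedPair {A : Type*} [CommRing A] (m : ℕ) (h e : ℕ → A) : Prop where
  h_zero : h 0 = 1
  e_zero : e 0 = 1
  sum_eq_zero {d : ℕ} (hd : ¬ m ∣ d) : ∑ p ∈ antidiagonal d, (-1) ^ p.1 * h p.1 * e p.2 = 0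

namespace IsTruncatedPair

variable {A : Type*} [CommRing A] {m : ℕ} {h e : ℕ → A}

theorem e_succ (H : IsTruncatedPair m h e) {n : ℕ} (hn : ¬ m ∣ n + 1) :
    e (n + 1) = ∑ p ∈ antidiagonal n, (-1 : ℤ) ^ p.1 • (h (p.1 + 1) * e p.2) := by
  have hrel := H.sum_eq_zero hn
  rw [Finset.Nat.sum_antidiagonal_succ, pow_zero, H.h_zero, one_mul, one_mul] at hrel
  rw [eq_neg_of_add_eq_zero_left hrel, ← Finset.sum_neg_distrib]
  refine Finset.sum_congr rfl fun p _ => ?_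
  rw [zsmul_eq_mul]
  push_cast
  ring

theorem e_eq_sum_admissibleCompositions (H : IsTruncatedPair m h e) (n : ℕ) :
    e n = ∑ δ ∈ admissibleCompositions m n, epsL δ • ((δ.map h).prod * e (n - δ.sum)) := by
  induction n using Nat.strong_induction_on with
  | _ n ih =>
  by_cases hn : m ∣ n
  · simp [admissibleCompositions_of_dvd hn, epsL]
  obtain ⟨n, rfl⟩ : ∃ k, n = k + 1 :=
    Nat.exists_eq_add_one_of_ne_zero fun h0 => hn (h0 ▸ dvd_zero m)
  rw [H.e_succ hn, sum_admissibleCompositions_succ hn]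
  refine Finset.sum_congr rfl fun ⟨i, j⟩ hij => ?_
  obtain rfl : i + j = n := mem_antidiagonal.1 hij
  dsimp only
  rw [ih j (by omega), Finset.mul_sum, Finset.smul_sum]
  refine Finset.sum_congr rfl fun δ hδ => ?_
  have hsub : i + j + 1 - (δ ++ [i + 1]).sum = j - δ.sum := by
    rw [List.sum_append, List.sum_singleton]
    omega
  rw [hsub, epsL_append_succ (mem_admissibleCompositions.1 hδ).1.1, List.map_append,
    List.prod_append, List.map_singleton, List.prod_singleton]
  simp only [zsmul_eq_mul]
  push_cast
  ring

theorem e_eq_sum_congruentPartitions (H : IsTruncatedPair m h e) (n : ℕ) :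
    e n = ∑ l ∈ congruentPartitions m n,
      signedNumCompM m l • ((l.map h).prod * e (n - l.sum)) := by
  rw [H.e_eq_sum_admissibleCompositions n,
    ← Finset.sum_fiberwise_of_maps_to fun δ hδ => sortDesc_mem_congruentPartitions hδ]
  refine Finset.sum_congr rfl fun l hl => ?_
  have hconst : ∀ δ ∈ ({δ ∈ admissibleCompositions m n | sortDesc δ = l} : Finset _),
      epsL δ • ((δ.map h).prod * e (n - δ.sum)) = epsL l • ((l.map h).prod * e (n - l.sum)) := by
    intro δ hδ
    have hperm : δ.Perm l := (Finset.mem_filter.1 hδ).2 ▸ (perm_sortDesc δ).symm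
    rw [epsL_eq_of_perm hperm, (hperm.map h).prod_eq, hperm.sum_eq]
  rw [Finset.sum_congr rfl hconst, Finset.sum_const,
    card_admissibleCompositions_sortDesc_eq (mem_congruentPartitions.1 hl), signedNumCompM,
    mul_comm (epsL l), mul_smul, natCast_zsmul]

theorem prod_map_e_eq_sum_partitionTuples (H : IsTruncatedPair m h e) (β : List ℕ) :
    (β.map e).prod = ∑ p ∈ partitionTuples m β, (∏ i, signedNumCompM m (p i)) •
      (((List.ofFn p).flatten.map h).prod * ((remainders β p).map e).prod) := by
  rw [← Fin.prod_univ_fun_getElem β e,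
    Finset.prod_congr rfl fun i _ => H.e_eq_sum_congruentPartitions β[i], Finset.prod_univ_sum]
  refine Finset.sum_congr rfl fun p _ => ?_
  simp only [zsmul_eq_mul, Finset.prod_mul_distrib, Int.cast_prod, List.map_flatten,
    List.prod_flatten, List.map_ofFn, List.prod_ofFn, remainders, Function.comp_apply]

theorem prod_map_h_mul_prod_map_e (H : IsTruncatedPair m h e) (α β : List ℕ) :
    (α.map h).prod * (β.map e).prod =
      ∑ p ∈ partitionTuples m β, (∏ i, signedNumCompM m (p i)) •
        (((sortDesc (α ++ (tupleType m β p).1)).map h).prod *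
          (((tupleType m β p).2.map (m * ·)).map e).prod) := by
  rw [H.prod_map_e_eq_sum_partitionTuples β, Finset.mul_sum]
  refine Finset.sum_congr rfl fun p hp => ?_
  have hh : ((sortDesc (α ++ (tupleType m β p).1)).map h).prod =
      (α.map h).prod * ((List.ofFn p).flatten.map h).prod := by
    rw [((perm_sortDesc _).map h).prod_eq, List.map_append, List.prod_append, tupleType,
      ((perm_sortDesc _).map h).prod_eq]
  have he : (((tupleType m β p).2.map (m * ·)).map e).prod = ((remainders β p).map e).prod := by
    rw [((map_mul_tupleType_perm hp).map e).prod_eq, prod_map_filter_ne_zero e H.e_zero]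
  rw [hh, he, mul_smul_comm, mul_assoc]

end IsTruncatedPair

theorem isTruncatedPair_gmk (m : ℕ) :
    IsTruncatedPair m (fun i => gmk m (Hh i)) (fun j => gmk m (Ee j)) where
  h_zero := by simp [Hh]
  e_zero := by simp [Ee]
  sum_eq_zero {d} hd := by
    have hrel : gmk m (truncRel d) = 0 := Ideal.Quotient.eq_zero_iff_mem.2 <|
      Ideal.subset_span ⟨d, Nat.pos_of_ne_zero fun h0 => hd (h0 ▸ dvd_zero m), hd, rfl⟩
    rw [Finset.Nat.sum_antidiagonal_eq_sum_range_succ_mk]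
    simpa [truncRel] using hrel

theorem gmk_hprod_mul_eprod (m : ℕ) (α β : List ℕ) :
    gmk m (hprod α * eprod β) =
      (α.map fun i => gmk m (Hh i)).prod * (β.map fun j => gmk m (Ee j)).prod := by
  simp only [hprod, eprod, map_mul, map_list_prod, List.map_map, Function.comp_def]

theorem stmt0 {m n : ℕ} (hm : 0 < m) (α β : List ℕ)
    (hα : ∀ x ∈ α, 0 < x) (hβ : ∀ x ∈ β, 0 < x) (hn : α.sum + β.sum = n) :
    gmk m (hprod α * eprod β) =
      ∑ᶠ q ∈ {q : List ℕ × List ℕ |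
          IsPartitionL q.1 ∧ IsPartitionL q.2 ∧ α.sum + q.1.sum + m * q.2.sum = n},
        cB m β q.1 q.2 • gmk m (hprod (sortDesc (α ++ q.1)) * eprod (q.2.map (m * ·))) := by
  have maps_to : ∀ p ∈ partitionTuples m β,
      tupleType m β p ∈ (finite_setOf_isPartitionL_pair hm α.sum n).toFinset := fun p hp =>
    (Set.Finite.mem_toFinset _).2 ⟨isPartitionL_tupleType_fst hp, isPartitionL_tupleType_snd hp,
      by rw [add_assoc, sum_tupleType hp, hn]⟩
  rw [finsum_mem_eq_finite_toFinset_sum _ (finite_setOf_isPartitionL_pair hm α.sum n)]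
  simp only [gmk_hprod_mul_eprod]
  rw [(isTruncatedPair_gmk m).prod_map_h_mul_prod_map_e α β,
    ← Finset.sum_fiberwise_of_maps_to maps_to]
  refine Finset.sum_congr rfl fun ⟨ξ, μ⟩ hq => ?_
  obtain ⟨hξ, hμ, -⟩ := (Set.Finite.mem_toFinset _).1 hq
  rw [cB_eq_sum_partitionTuples hm hξ.1 hμ.1, Finset.sum_smul]
  refine Finset.sum_congr rfl fun p hp => ?_
  rw [(Finset.mem_filter.1 hp).2]
end
end

section
/- Let m be a positive integer. For every d ≥ 1, in the ring Γ^(m) the element e_d is a ℤ-linear combination of elements of the form h_λ e_{sm}, where λ ranges over partitions and s over nonnegative integers with |λ| + sm = d (with e_0 = 1). -/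
noncomputable section

open MvPolynomial

/-!
When `m ∤ d`, the relation of degree `d` expresses `e_d` as a `ℤ`-linear combination of the products
`h_i e_{d-i}` with `1 ≤ i ≤ d`. Expanding each `e_{d-i}` by the same relation, and so on, stops only
at elements `e_{sm}`, which have picked up a product of `h_i`'s.
-/

theorem Hh_zero : Hh 0 = 1 := if_pos rfl

theorem hprod_nil : hprod [] = 1 := rfl

theorem hprod_orderedInsert (i : ℕ) (l : List ℕ) :
    hprod (l.orderedInsert (· ≥ ·) i) = Hh i * hprod l := by
  simp only [hprod, ((l.perm_orderedInsert (· ≥ ·) i).map Hh).prod_eq, List.map_cons,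
    List.prod_cons]

theorem isPartitionL_nil : IsPartitionL [] := by
  simp [IsPartitionL]

theorem IsPartitionL.orderedInsert {l : List ℕ} (hl : IsPartitionL l) {i : ℕ} (hi : 0 < i) :
    IsPartitionL (l.orderedInsert (· ≥ ·) i) := by
  refine ⟨hl.1.orderedInsert i l, fun x hx => ?_⟩
  obtain rfl | hxl := (List.mem_orderedInsert _).1 hx
  · exact hi
  · exact hl.2 x hxl

theorem truncRel_eq_Ee_add_sum (d : ℕ) :
    truncRel d = Ee d +
      ∑ i ∈ Finset.range d, (-1) ^ (i + 1) * Hh (i + 1) * Ee (d - (i + 1)) := by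
  rw [truncRel, Finset.sum_range_succ', add_comm]
  simp only [pow_zero, Hh_zero, mul_one, one_mul, Nat.sub_zero]

theorem gmk_truncRel_eq_zero {m d : ℕ} (hmd : ¬ m ∣ d) : gmk m (truncRel d) = 0 := by
  have hd : 0 < d := Nat.pos_of_ne_zero fun hd => hmd (hd ▸ dvd_zero m)
  exact Ideal.Quotient.eq_zero_iff_mem.2 (Ideal.subset_span ⟨d, hd, hmd, rfl⟩)

theorem gmk_Ee_eq_neg_sum {m d : ℕ} (hmd : ¬ m ∣ d) :
    gmk m (Ee d) = -∑ i ∈ Finset.range d,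
      (-1 : ℤ) ^ (i + 1) • (gmk m (Hh (i + 1)) * gmk m (Ee (d - (i + 1)))) := by
  have hrel := gmk_truncRel_eq_zero hmd
  rw [truncRel_eq_Ee_add_sum, map_add, map_sum] at hrel
  rw [eq_neg_of_add_eq_zero_left hrel]
  simp [mul_assoc]

/-- The set of pairs `(λ, s)` of a partition `λ` and a natural number `s` with `|λ| + sm = d`. -/
def heIndex (m d : ℕ) : Set (List ℕ × ℕ) :=
  {q | IsPartitionL q.1 ∧ q.1.sum + q.2 * m = d}

/-- The subgroup of `Γ^(m)` spanned by the elements `h_λ e_{sm}` with `λ` a partition and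
`|λ| + sm = d`. -/
def heSpan (m d : ℕ) : Submodule ℤ (Gamma m) :=
  Submodule.span ℤ ((fun q => gmk m (hprod q.1 * Ee (q.2 * m))) '' heIndex m d)

theorem gmk_hprod_mul_Ee_mem_heSpan {m d : ℕ} {q : List ℕ × ℕ} (hq : q ∈ heIndex m d) :
    gmk m (hprod q.1 * Ee (q.2 * m)) ∈ heSpan m d :=
  Submodule.subset_span (Set.mem_image_of_mem _ hq)

theorem gmk_Ee_mul_mem_heSpan (m s : ℕ) : gmk m (Ee (s * m)) ∈ heSpan m (s * m) := by
  have hq : ([], s) ∈ heIndex m (s * m) := ⟨isPartitionL_nil, by simp⟩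
  simpa only [hprod_nil, one_mul] using gmk_hprod_mul_Ee_mem_heSpan hq

theorem orderedInsert_mem_heIndex {m d i : ℕ} (hi : 0 < i) {q : List ℕ × ℕ}
    (hq : q ∈ heIndex m d) : (q.1.orderedInsert (· ≥ ·) i, q.2) ∈ heIndex m (i + d) := by
  refine ⟨hq.1.orderedInsert hi, ?_⟩
  rw [(q.1.perm_orderedInsert (· ≥ ·) i).sum_eq, List.sum_cons, add_assoc, hq.2]

theorem gmk_Hh_mul_mem_heSpan (i : ℕ) {m d : ℕ} {x : Gamma m} (hx : x ∈ heSpan m d) :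
    gmk m (Hh i) * x ∈ heSpan m (i + d) := by
  obtain rfl | hi := i.eq_zero_or_pos
  · simpa only [Hh_zero, map_one, one_mul, zero_add] using hx
  suffices heSpan m d ≤ (heSpan m (i + d)).comap (LinearMap.mulLeft ℤ (gmk m (Hh i))) from this hx
  refine Submodule.span_le.2 ?_
  rintro _ ⟨q, hq, rfl⟩
  have hmem := gmk_hprod_mul_Ee_mem_heSpan (orderedInsert_mem_heIndex hi hq)
  rwa [hprod_orderedInsert, mul_assoc, map_mul] at hmem

theorem gmk_Ee_mem_heSpan (m d : ℕ) : gmk m (Ee d) ∈ heSpan m d := by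
  induction d using Nat.strong_induction_on with
  | _ d ih =>
    by_cases hmd : m ∣ d
    · obtain ⟨s, rfl⟩ := exists_eq_mul_left_of_dvd hmd
      exact gmk_Ee_mul_mem_heSpan m s
    · rw [gmk_Ee_eq_neg_sum hmd]
      refine neg_mem (sum_mem fun i hi => Submodule.smul_mem _ _ ?_)
      have hid : i < d := Finset.mem_range.1 hi
      have hmem := gmk_Hh_mul_mem_heSpan (i + 1) (ih (d - (i + 1)) (by omega))
      rwa [Nat.add_sub_of_le hid] at hmem

theorem stmt2 {m : ℕ} (hm : 0 < m) (d : ℕ) (hd : 1 ≤ d) :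
    ∃ (S : Finset (List ℕ × ℕ)) (c : List ℕ × ℕ → ℤ),
      (∀ q ∈ S, IsPartitionL q.1 ∧ q.1.sum + q.2 * m = d) ∧
      gmk m (Ee d) = ∑ q ∈ S, c q • gmk m (hprod q.1 * Ee (q.2 * m)) := by
  obtain ⟨c, hc, hsum⟩ :=
    (Finsupp.mem_span_image_iff_linearCombination ℤ).1 (gmk_Ee_mem_heSpan m d)
  exact ⟨c.support, c, fun q hq => hc hq, hsum.symm⟩
end
end

section
/- Let m be a positive integer. For every d ≥ 1, in the ring Γ^(m) we have e_d = det(A_d), where A_d is the d×d matrix with entries a_{ij} given by: a_{ij} = h_{1−i+j} if m does not divide j; a_{ij} = (−1)^{j+1} e_j if m divides j and i = 1; a_{ij} = 1 if m divides j and i = j+1; and a_{ij} = 0 otherwise. -/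
noncomputable section

open MvPolynomial

/-- `h_i` for an integer index, with `h_i = 0` for `i < 0` and `h_0 = 1`. -/
def HhZ (i : ℤ) : SymR := if i < 0 then 0 else Hh i.toNat

/-- The `d × d` matrix `A_d = (a_{ij})_{1 ≤ i,j ≤ d}` with `a_{ij} = h_{1-i+j}` if `m ∤ j`,
`a_{ij} = (-1)^{j+1} e_j` if `m ∣ j` and `i = 1`, `a_{ij} = 1` if `m ∣ j` and `i = j+1`,
and `a_{ij} = 0` otherwise.  (Indices are 1-based: `i = i₀ + 1`, `j = j₀ + 1`.) -/
def Amat (m d : ℕ) : Matrix (Fin d) (Fin d) SymR := fun i j =>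
  if ¬ m ∣ ((j : ℕ) + 1) then HhZ (1 - ((i : ℕ) + 1 : ℤ) + ((j : ℕ) + 1 : ℤ))
  else if (i : ℕ) + 1 = 1 then (-1 : SymR) ^ (((j : ℕ) + 1) + 1) * Ee ((j : ℕ) + 1)
  else if (i : ℕ) + 1 = ((j : ℕ) + 1) + 1 then 1
  else 0

/-!
Every column of `A_d` vanishes below the subdiagonal and has subdiagonal entry `1`. Continue the
columns to infinitely many rows and put `c i = (-1) ^ i * e i`. Then `c` annihilates every column:
for `m ∤ j` this is the defining relation of degree `j`, and for `m ∣ j` the two nonzero entries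
were chosen to cancel. Hence in the `d × d` matrix the row combination with coefficients `c` kills
all columns but the last, where it leaves minus the cut-off term, and Cramer's rule gives
`c 0 * det A_d = (-1) ^ d * c d`.
-/

open scoped Matrix

section CommRing

variable {S : Type*} [CommRing S]

theorem mul_det_eq_of_vecMul_eq_single {n : ℕ} {A : Matrix (Fin (n + 1)) (Fin (n + 1)) S}
    {v : Fin (n + 1) → S} {j : Fin (n + 1)} {c : S} (hv : v ᵥ* A = Pi.single j c)
    (i : Fin (n + 1)) :
    v i * A.det = c * ((-1) ^ (i + j : ℕ) * (A.submatrix i.succAbove j.succAbove).det) := by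
  calc v i * A.det = ((v ᵥ* A) ᵥ* A.adjugate) i := by
        rw [Matrix.vecMul_vecMul, Matrix.mul_adjugate, Matrix.vecMul_smul, Matrix.vecMul_one,
          Pi.smul_apply, smul_eq_mul, mul_comm]
    _ = c * A.adjugate j i := by
        rw [hv, Matrix.single_vecMul, Pi.smul_apply, Matrix.row_apply, smul_eq_mul]
    _ = _ := by rw [Matrix.adjugate_fin_succ_eq_det_submatrix]

section Hessenberg

variable {a : ℕ → ℕ → S} {c : ℕ → S}

theorem det_submatrix_succ_castSucc_of_hessenberg (ha : ∀ i j, j + 1 < i → a i j = 0) (n : ℕ) :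
    ((Matrix.of fun i j : Fin (n + 1) ↦ a i j).submatrix Fin.succ Fin.castSucc).det =
      ∏ i ∈ Finset.range n, a (i + 1) i := by
  have htri : ((Matrix.of fun i j : Fin (n + 1) ↦ a i j).submatrix
      Fin.succ Fin.castSucc).IsUpperTriangular :=
    fun i j hji ↦ ha i.succ j.castSucc (Nat.succ_lt_succ hji)
  rw [Matrix.det_of_isUpperTriangular htri]
  exact Fin.prod_univ_eq_prod_range (fun i ↦ a (i + 1) i) n

theorem vecMul_hessenberg_eq_single (ha : ∀ i j, j + 1 < i → a i j = 0)
    (hc : ∀ j, ∑ i ∈ Finset.range (j + 2), c i * a i j = 0) (n : ℕ) :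
    (fun i : Fin (n + 1) ↦ c i) ᵥ* (Matrix.of fun i j : Fin (n + 1) ↦ a i j) =
      Pi.single (Fin.last n) (-(c (n + 1) * a (n + 1) n)) := by
  ext j
  have hsum : ((fun i : Fin (n + 1) ↦ c i) ᵥ* (Matrix.of fun i j : Fin (n + 1) ↦ a i j)) j =
      ∑ i ∈ Finset.range (n + 1), c i * a i j :=
    Fin.sum_univ_eq_sum_range (fun i ↦ c i * a i j) (n + 1)
  rw [hsum]
  obtain rfl | hj := eq_or_ne j (Fin.last n)
  · rw [Pi.single_eq_same, Fin.val_last]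
    exact eq_neg_of_add_eq_zero_left ((Finset.sum_range_succ _ _).symm.trans (hc n))
  · have hjn : (j : ℕ) < n := Fin.val_lt_last hj
    rw [Pi.single_eq_of_ne hj, ← hc j]
    refine (Finset.sum_subset (Finset.range_mono (by lia)) fun i _ hi ↦ ?_).symm
    rw [ha i j (by grind), mul_zero]

theorem mul_det_hessenberg (ha : ∀ i j, j + 1 < i → a i j = 0)
    (hc : ∀ j, ∑ i ∈ Finset.range (j + 2), c i * a i j = 0) (d : ℕ) :
    c 0 * (Matrix.of fun i j : Fin d ↦ a i j).det =
      (-1) ^ d * c d * ∏ i ∈ Finset.range d, a (i + 1) i := by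
  cases d with
  | zero => simp
  | succ n =>
    have hcramer := mul_det_eq_of_vecMul_eq_single (vecMul_hessenberg_eq_single ha hc n) 0
    rw [Fin.succAbove_zero, Fin.succAbove_last, det_submatrix_succ_castSucc_of_hessenberg ha,
      Fin.val_zero, Fin.val_last, zero_add] at hcramer
    rw [Finset.prod_range_succ]
    linear_combination hcramer

end Hessenberg

theorem sum_range_neg_one_pow_mul_mul_reflect (f g : ℕ → S) (d : ℕ) :
    ∑ i ∈ Finset.range (d + 1), (-1) ^ i * f i * g (d - i) =
      (-1) ^ d * ∑ i ∈ Finset.range (d + 1), (-1) ^ i * g i * f (d - i) := by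
  rw [← Finset.sum_flip, Finset.mul_sum]
  refine Finset.sum_congr rfl fun i hi ↦ ?_
  have hid : i ≤ d := Finset.mem_range_succ_iff.mp hi
  have hsign : (-1 : S) ^ (d - i) = (-1) ^ d * (-1) ^ i := by
    rw [← pow_add]
    exact neg_one_pow_congr (by grind)
  rw [Nat.sub_sub_self hid, hsign]
  ring

/-- The entries of the truncated Jacobi–Trudi matrix of the sequences `h` and `e`, with rows and
columns numbered from `0`. The predicate `p` selects the (`1`-based) columns that lose their
`h`-entries, which for `Amat m` are the multiples of `m`. -/
def jacobiTrudiEntry (p : ℕ → Prop) [DecidablePred p] (h e : ℕ → S) (i j : ℕ) : S :=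
  if p (j + 1) then
    if i = 0 then (-1) ^ j * e (j + 1) else if i = j + 1 then 1 else 0
  else if i ≤ j + 1 then h (j + 1 - i) else 0

section JacobiTrudi

variable (p : ℕ → Prop) [DecidablePred p] {h e : ℕ → S}

theorem jacobiTrudiEntry_of_lt (h e : ℕ → S) {i j : ℕ} (hij : j + 1 < i) :
    jacobiTrudiEntry p h e i j = 0 := by
  grind [jacobiTrudiEntry]

theorem jacobiTrudiEntry_succ_self (h0 : h 0 = 1) (e : ℕ → S) (j : ℕ) :
    jacobiTrudiEntry p h e (j + 1) j = 1 := by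
  simp [jacobiTrudiEntry, h0]

theorem sum_neg_one_pow_mul_jacobiTrudiEntry (e0 : e 0 = 1)
    (rel : ∀ d, 0 < d → ¬ p d → ∑ i ∈ Finset.range (d + 1), (-1) ^ i * h i * e (d - i) = 0)
    (j : ℕ) :
    ∑ i ∈ Finset.range (j + 2), (-1) ^ i * e i * jacobiTrudiEntry p h e i j = 0 := by
  by_cases hp : p (j + 1)
  · rw [Finset.sum_range_succ, Finset.sum_range_succ', Finset.sum_eq_zero]
    · simp [jacobiTrudiEntry, hp, e0, pow_succ]
    · intro i hi
      have hij : i ≠ j := (Finset.mem_range.mp hi).ne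
      simp [jacobiTrudiEntry, hp, hij]
  · calc ∑ i ∈ Finset.range (j + 2), (-1) ^ i * e i * jacobiTrudiEntry p h e i j
        = ∑ i ∈ Finset.range (j + 2), (-1) ^ i * e i * h (j + 1 - i) := by
          refine Finset.sum_congr rfl fun i hi ↦ ?_
          rw [jacobiTrudiEntry, if_neg hp, if_pos (Finset.mem_range_succ_iff.mp hi)]
      _ = 0 := by
          rw [sum_range_neg_one_pow_mul_mul_reflect, rel _ j.succ_pos hp, mul_zero]

theorem stmt3_general (h0 : h 0 = 1) (e0 : e 0 = 1)
    (rel : ∀ d, 0 < d → ¬ p d → ∑ i ∈ Finset.range (d + 1), (-1) ^ i * h i * e (d - i) = 0)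
    (d : ℕ) :
    e d = (Matrix.of fun i j : Fin d ↦ jacobiTrudiEntry p h e i j).det := by
  have hdet := mul_det_hessenberg (fun _ _ ↦ jacobiTrudiEntry_of_lt p h e)
    (sum_neg_one_pow_mul_jacobiTrudiEntry p e0 rel) d
  simpa [jacobiTrudiEntry_succ_self p h0, e0, ← mul_assoc, ← mul_pow] using hdet.symm

end JacobiTrudi

end CommRing

theorem HhZ_natCast_sub_natCast (i j : ℕ) :
    HhZ ((j : ℤ) - i) = if i ≤ j then Hh (j - i) else 0 := by
  grind [HhZ]

theorem sum_neg_one_pow_mul_gmk_Hh_mul_gmk_Ee {m d : ℕ} (hd : 0 < d) (hmd : ¬ m ∣ d) :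
    ∑ i ∈ Finset.range (d + 1), (-1) ^ i * gmk m (Hh i) * gmk m (Ee (d - i)) = 0 := by
  have hrel : gmk m (truncRel d) = 0 :=
    Ideal.Quotient.eq_zero_iff_mem.mpr (Ideal.subset_span ⟨d, hd, hmd, rfl⟩)
  simpa [truncRel] using hrel

theorem gmk_Amat_apply (m d : ℕ) (i j : Fin d) :
    gmk m (Amat m d i j) =
      jacobiTrudiEntry (m ∣ ·) (fun k ↦ gmk m (Hh k)) (fun k ↦ gmk m (Ee k)) i j := by
  have hindex : 1 - ((i : ℕ) + 1 : ℤ) + ((j : ℕ) + 1 : ℤ) = ((j + 1 : ℕ) : ℤ) - (i : ℕ) := by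
    push_cast
    ring
  rw [Amat, hindex, HhZ_natCast_sub_natCast, jacobiTrudiEntry]
  split_ifs <;> simp_all [pow_succ]

theorem gmk_det_Amat (m d : ℕ) :
    gmk m (Amat m d).det = (Matrix.of fun i j : Fin d ↦
      jacobiTrudiEntry (m ∣ ·) (fun k ↦ gmk m (Hh k)) (fun k ↦ gmk m (Ee k)) i j).det := by
  rw [RingHom.map_det]
  exact congrArg Matrix.det (Matrix.ext (gmk_Amat_apply m d))

theorem stmt3 {m : ℕ} (hm : 0 < m) (d : ℕ) (hd : 1 ≤ d) :
    gmk m (Ee d) = gmk m (Amat m d).det := by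
  rw [gmk_det_Amat]
  exact stmt3_general (m ∣ ·) (h := fun k ↦ gmk m (Hh k)) (e := fun k ↦ gmk m (Ee k))
    (by simp [Hh]) (by simp [Ee]) (fun _ ↦ sum_neg_one_pow_mul_gmk_Hh_mul_gmk_Ee) d
end
end

section
/- Let m be a positive integer, let μ be a partition with |μ| = n ≥ 1, and let r ≥ 0 be an integer. In the polynomial ring R = ℤ[h_1, h_2, ..., e_1, e_2, ...], the coefficient of the monomial h_{μ_1}···h_{μ_{ℓ(μ)}}·e_{rm} in det(A_{n+rm}) equals the coefficient of the monomial h_{μ_1}···h_{μ_{ℓ(μ)}} in det(A_n). (For r = 0 both quantities coincide by definition.) -/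
noncomputable section

open MvPolynomial

/-- The exponent vector of the monomial `h_{μ_1} ⋯ h_{μ_ℓ} ⋅ e_t` (with no `e`-factor
when `t = 0`, since `e_0 = 1`). -/
def expVec (μ : List ℕ) (t : ℕ) : (ℕ ⊕ ℕ) →₀ ℕ :=
  Multiset.toFinsupp
    (((μ.map (Sum.inl : ℕ → ℕ ⊕ ℕ) : Multiset (ℕ ⊕ ℕ)) + if t = 0 then 0 else {Sum.inr t}))

/-!
`A_d` is upper Hessenberg with unit subdiagonal and is the leading block of `A_{d+1}`. Hence if
`v` is a left kernel vector, normalized by `v₀ = 1`, of `A_{d+1}` with its last column removed, then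
comparing maximal minors gives `det A_d = (-1)^d v_d`. The columns `j` with `m ∤ j` say that
`(∑ v_i z^i) (∑ h_i z^i)` is supported on exponents divisible by `m`, the others that
`v_j = (-1)^j e_j`. Series supported on multiples of `m` are closed under multiplication, so
`∑ v_i z^i = E Q` solves these equations, where `E = ∑_{m ∣ k} (-1)^k e_k z^k` and `Q` is the
solution obtained when every `e_k` with `k > 0` is set to zero. Since `Q` only involves the `h_i`,
the `e_t`-part of `v_{n+t}` is `(-1)^t Q_n` for every multiple `t` of `m`, including `t = 0`.
-/

section Determinants

open Matrix

variable {R : Type*} [CommRing R] {n : ℕ}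

-- Both sides come from Cramer's rule for `B` with the basis vector `eⱼ` adjoined as a column.
theorem mul_det_submatrix_succAbove_of_vecMul_eq_zero {B : Matrix (Fin (n + 1)) (Fin n) R}
    {v : Fin (n + 1) → R} (hvB : v ᵥ* B = 0) (i j : Fin (n + 1)) :
    v i * ((-1) ^ (j : ℕ) * (B.submatrix j.succAbove id).det) =
      v j * ((-1) ^ (i : ℕ) * (B.submatrix i.succAbove id).det) := by
  let M : Matrix (Fin (n + 1)) (Fin (n + 1)) R :=
    fun k ↦ Fin.cons ((Pi.single j 1 : Fin (n + 1) → R) k) (B k)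
  have minor_M (k : Fin (n + 1)) : M.submatrix k.succAbove Fin.succ = B.submatrix k.succAbove id :=
    rfl
  have det_M : M.det = (-1) ^ (j : ℕ) * (B.submatrix j.succAbove id).det := by
    rw [det_succ_column_zero, Finset.sum_eq_single j]
    · simp [M, minor_M]
    · intro k _ hk
      simp [M, hk]
    · simp
  have vecMul_M : v ᵥ* M = Pi.single 0 (v j) := by
    ext k
    cases k using Fin.cases with
    | zero => simp [M, vecMul, dotProduct, Pi.single_apply]
    | succ k => simpa [M, vecMul, dotProduct] using congrFun hvB k
  calc v i * ((-1) ^ (j : ℕ) * (B.submatrix j.succAbove id).det)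
      = (v ᵥ* (M * M.adjugate)) i := by
        rw [mul_adjugate, vecMul_smul, vecMul_one, det_M, Pi.smul_apply, smul_eq_mul, mul_comm]
    _ = v j * M.adjugate 0 i := by rw [← vecMul_vecMul, vecMul_M, single_vecMul]; rfl
    _ = v j * ((-1) ^ (i : ℕ) * (B.submatrix i.succAbove id).det) := by
      simp [adjugate_fin_succ_eq_det_submatrix, minor_M]

theorem det_submatrix_castSucc_of_hessenberg {B : Matrix (Fin (n + 1)) (Fin n) R}
    {v : Fin (n + 1) → R} (hB_below : ∀ i j, j.succ < i → B i j = 0)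
    (hB_sub : ∀ j, B j.succ j = 1) (hv : v 0 = 1) (hvB : v ᵥ* B = 0) :
    (B.submatrix Fin.castSucc id).det = (-1) ^ n * v (Fin.last n) := by
  have det_succ : (B.submatrix Fin.succ id).det = 1 := by
    rw [det_of_isUpperTriangular]
    · simp [hB_sub]
    · intro i j hji
      exact hB_below _ _ (Fin.succ_lt_succ_iff.mpr hji)
  have minors := mul_det_submatrix_succAbove_of_vecMul_eq_zero hvB 0 (Fin.last n)
  simp only [hv, Fin.succAbove_last, Fin.succAbove_zero, det_succ, Fin.val_last, Fin.val_zero,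
    pow_zero, one_mul, mul_one] at minors
  rw [← minors, ← mul_assoc, ← mul_pow, neg_one_mul, neg_neg, one_pow, one_mul]

end Determinants

section PowerSeries

open scoped PowerSeries

variable {R : Type*} [CommSemiring R] {m : ℕ} {F G : R⟦X⟧}

theorem coeff_mul_eq_zero_of_not_dvd (hF : ∀ k, ¬ m ∣ k → F.coeff k = 0)
    (hG : ∀ k, ¬ m ∣ k → G.coeff k = 0) {d : ℕ} (hd : ¬ m ∣ d) : (F * G).coeff d = 0 := by
  rw [PowerSeries.coeff_mul]
  refine Finset.sum_eq_zero fun ⟨a, b⟩ hab ↦ ?_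
  rw [Finset.HasAntidiagonal.mem_antidiagonal] at hab
  by_cases ha : m ∣ a
  · rw [hG b fun hb ↦ hd (hab ▸ dvd_add ha hb), mul_zero]
  · rw [hF a ha, zero_mul]

theorem coeff_mul_of_dvd (hF : ∀ k, ¬ m ∣ k → F.coeff k = 0) (hG₀ : G.coeff 0 = 1)
    (hG : ∀ k, k ≠ 0 → m ∣ k → G.coeff k = 0) {d : ℕ} (hd : m ∣ d) :
    (F * G).coeff d = F.coeff d := by
  rw [PowerSeries.coeff_mul, Finset.sum_eq_single (d, 0)]
  · rw [hG₀, mul_one]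
  · rintro ⟨a, b⟩ hab hne
    rw [Finset.HasAntidiagonal.mem_antidiagonal] at hab
    by_cases ha : m ∣ a
    · have hb : m ∣ b := (Nat.dvd_add_right ha).mp (hab ▸ hd)
      rw [hG b (by rintro rfl; simp_all) hb, mul_zero]
    · rw [hF a ha, zero_mul]
  · simp

end PowerSeries

section Coefficients

theorem coeff_neg_one_pow_mul {σ R : Type*} [CommRing R] (u : σ →₀ ℕ) (k : ℕ)
    (p : MvPolynomial σ R) : coeff u ((-1) ^ k * p) = (-1) ^ k * coeff u p := by
  rw [← coeff_C_mul, C_pow, C_neg, C_1]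

theorem toFinsupp_map {σ τ : Type*} [DecidableEq σ] [DecidableEq τ] (f : σ → τ)
    (s : Multiset σ) :
    Multiset.toFinsupp (s.map f) = (Multiset.toFinsupp s).mapDomain f := by
  induction s using Multiset.induction_on with
  | empty => simp
  | cons a s ih =>
    rw [Multiset.map_cons, ← Multiset.singleton_add, ← Multiset.singleton_add, map_add, map_add,
      Finsupp.mapDomain_add, ih, Multiset.toFinsupp_singleton, Multiset.toFinsupp_singleton,
      Finsupp.mapDomain_single]

theorem expVec_eq_mapDomain_add (μ : List ℕ) (t : ℕ) :
    expVec μ t = (Multiset.toFinsupp (μ : Multiset ℕ)).mapDomain Sum.inl +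
      if t = 0 then 0 else Finsupp.single (Sum.inr t) 1 := by
  rw [expVec, map_add, ← Multiset.map_coe, toFinsupp_map, apply_ite Multiset.toFinsupp, map_zero,
    Multiset.toFinsupp_singleton]

theorem expVec_inr (μ : List ℕ) (t k : ℕ) :
    expVec μ t (Sum.inr k) = if t ≠ 0 ∧ t = k then 1 else 0 := by
  rw [expVec_eq_mapDomain_add, Finsupp.add_apply, Finsupp.mapDomain_of_notMem_range _ _ (by simp)]
  by_cases ht : t = 0 <;> simp [ht, Finsupp.single_apply]

theorem coeff_expVec_rename_inl (μ : List ℕ) (t : ℕ) (p : MvPolynomial ℕ ℤ) :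
    coeff (expVec μ t) (rename Sum.inl p) =
      if t = 0 then coeff (Multiset.toFinsupp (μ : Multiset ℕ)) p else 0 := by
  split_ifs with ht
  · rw [expVec_eq_mapDomain_add, if_pos ht, add_zero,
      coeff_rename_mapDomain _ Sum.inl_injective]
  · refine coeff_rename_eq_zero _ _ _ fun u hu ↦ absurd (DFunLike.congr_fun hu (Sum.inr t)) ?_
    rw [expVec_inr, Finsupp.mapDomain_of_notMem_range _ _ (by simp)]
    simp [ht]

theorem coeff_expVec_Ee_mul_rename_inl (μ : List ℕ) (t k : ℕ) (p : MvPolynomial ℕ ℤ) :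
    coeff (expVec μ t) (Ee k * rename Sum.inl p) =
      if k = t then coeff (Multiset.toFinsupp (μ : Multiset ℕ)) p else 0 := by
  rcases eq_or_ne k 0 with rfl | hk
  · simp [Ee, coeff_expVec_rename_inl, eq_comm]
  rw [Ee, if_neg hk, coeff_X_mul']
  simp only [Finsupp.mem_support_iff, expVec_inr]
  rcases eq_or_ne k t with rfl | hkt
  · have h_sub : expVec μ k - Finsupp.single (Sum.inr k) 1 = expVec μ 0 := by
      rw [expVec_eq_mapDomain_add, expVec_eq_mapDomain_add, if_neg hk, if_pos rfl,
        add_tsub_cancel_right, add_zero]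
    simp [hk, h_sub, coeff_expVec_rename_inl]
  · simp [hkt, hkt.symm]

end Coefficients

section Factorization

open scoped PowerSeries

/-- The generating function `∑ h_d z^d`. -/
def hSeries : SymR⟦X⟧ := PowerSeries.mk Hh

/-- The generating function `∑ (-1)^k e_k z^k`, restricted to the multiples `k` of `m`. -/
def eSeries (m : ℕ) : SymR⟦X⟧ := PowerSeries.mk fun k ↦ if m ∣ k then (-1) ^ k * Ee k else 0

/-- The `e`-free part of `(-1)^d det A_d`, as a polynomial in the `h_i` alone. It is the unique
sequence starting at `1`, vanishing at the positive multiples of `m`, whose convolution with the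
`h_i` vanishes away from the multiples of `m`. -/
def eFreePart (m : ℕ) : ℕ → MvPolynomial ℕ ℤ
  | 0 => 1
  | d + 1 => if m ∣ d + 1 then 0 else -∑ i : Fin (d + 1), eFreePart m i * X (d + 1 - i)

/-- The generating function of `eFreePart m` over the full ring `SymR`. -/
def eFreeSeries (m : ℕ) : SymR⟦X⟧ := PowerSeries.mk fun d ↦ rename Sum.inl (eFreePart m d)

/-- The series whose coefficients `v₀, v₁, …` span the left kernel of the matrices `A_{d+1}` with
their last column removed; it is the generating function of `(-1)^d det A_d`. -/
def kernelSeries (m : ℕ) : SymR⟦X⟧ := eSeries m * eFreeSeries m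

variable {m : ℕ}

theorem coeff_eSeries_of_dvd {k : ℕ} (hk : m ∣ k) :
    (eSeries m).coeff k = (-1) ^ k * Ee k := by
  rw [eSeries, PowerSeries.coeff_mk, if_pos hk]

theorem coeff_eSeries_of_not_dvd (k : ℕ) (hk : ¬ m ∣ k) : (eSeries m).coeff k = 0 := by
  rw [eSeries, PowerSeries.coeff_mk, if_neg hk]

theorem coeff_zero_eFreeSeries : (eFreeSeries m).coeff 0 = 1 := by
  rw [eFreeSeries, PowerSeries.coeff_mk, eFreePart, map_one]

theorem coeff_eFreeSeries_of_dvd (d : ℕ) (hd₀ : d ≠ 0) (hd : m ∣ d) :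
    (eFreeSeries m).coeff d = 0 := by
  obtain ⟨d, rfl⟩ := Nat.exists_eq_succ_of_ne_zero hd₀
  rw [eFreeSeries, PowerSeries.coeff_mk, eFreePart, if_pos hd, map_zero]

theorem coeff_eFreeSeries_mul_hSeries_of_not_dvd (d : ℕ) (hd : ¬ m ∣ d) :
    (eFreeSeries m * hSeries).coeff d = 0 := by
  obtain ⟨d, rfl⟩ := Nat.exists_eq_succ_of_ne_zero (by rintro rfl; simp at hd : d ≠ 0)
  have recurrence : rename Sum.inl (eFreePart m (d + 1)) =
      -∑ i ∈ Finset.range (d + 1), rename Sum.inl (eFreePart m i) * Hh (d + 1 - i) := by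
    rw [eFreePart, if_neg hd, map_neg, map_sum, Finset.sum_range]
    congr! 2 with i
    rw [map_mul, rename_X, Hh, if_neg (by omega)]
  rw [PowerSeries.coeff_mul, Finset.Nat.sum_antidiagonal_eq_sum_range_succ_mk,
    Finset.sum_range_succ]
  simp only [eFreeSeries, hSeries, PowerSeries.coeff_mk]
  rw [recurrence, Nat.sub_self, Hh, if_pos rfl, mul_one, add_neg_cancel]

theorem coeff_kernelSeries_of_dvd {d : ℕ} (hd : m ∣ d) :
    (kernelSeries m).coeff d = (-1) ^ d * Ee d := by
  rw [kernelSeries, coeff_mul_of_dvd coeff_eSeries_of_not_dvd coeff_zero_eFreeSeries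
    coeff_eFreeSeries_of_dvd hd, coeff_eSeries_of_dvd hd]

theorem coeff_zero_kernelSeries : (kernelSeries m).coeff 0 = 1 := by
  rw [coeff_kernelSeries_of_dvd (dvd_zero m), pow_zero, one_mul, Ee, if_pos rfl]

theorem coeff_kernelSeries_mul_hSeries_of_not_dvd {d : ℕ} (hd : ¬ m ∣ d) :
    (kernelSeries m * hSeries).coeff d = 0 := by
  rw [kernelSeries, mul_assoc]
  exact coeff_mul_eq_zero_of_not_dvd coeff_eSeries_of_not_dvd
    coeff_eFreeSeries_mul_hSeries_of_not_dvd hd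

theorem coeff_expVec_coeff_kernelSeries (μ : List ℕ) (n : ℕ) {t : ℕ} (ht : m ∣ t) :
    coeff (expVec μ t) ((kernelSeries m).coeff (n + t)) =
      (-1) ^ t * coeff (Multiset.toFinsupp (μ : Multiset ℕ)) (eFreePart m n) := by
  have coeff_term (k d : ℕ) :
      coeff (expVec μ t) ((eSeries m).coeff k * (eFreeSeries m).coeff d) =
        if k = t then (-1) ^ t * coeff (Multiset.toFinsupp (μ : Multiset ℕ)) (eFreePart m d)
        else 0 := by
    by_cases hk : m ∣ k
    · rw [coeff_eSeries_of_dvd hk, eFreeSeries, PowerSeries.coeff_mk, mul_assoc,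
        coeff_neg_one_pow_mul, coeff_expVec_Ee_mul_rename_inl]
      split_ifs with hkt
      · rw [hkt]
      · rw [mul_zero]
    · rw [coeff_eSeries_of_not_dvd k hk, zero_mul, coeff_zero, if_neg (by rintro rfl; exact hk ht)]
  rw [kernelSeries, PowerSeries.coeff_mul, coeff_sum, Finset.sum_eq_single (t, n)]
  · rw [coeff_term, if_pos rfl]
  · rintro ⟨k, d⟩ hkd hne
    rw [Finset.HasAntidiagonal.mem_antidiagonal] at hkd
    rw [coeff_term, if_neg]
    rintro rfl
    exact hne (Prod.ext rfl (by grind))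
  · intro hmem
    exact absurd (Finset.HasAntidiagonal.mem_antidiagonal.mpr (add_comm t n)) hmem

end Factorization

section AmatDeterminant

open Matrix

variable {m d : ℕ}

theorem Amat_apply_of_not_dvd {i j : Fin d} (hj : ¬ m ∣ (j : ℕ) + 1) :
    Amat m d i j = if (i : ℕ) ≤ j + 1 then Hh (j + 1 - i) else 0 := by
  rw [Amat, if_pos hj, HhZ]
  by_cases hij : (i : ℕ) ≤ j + 1
  · rw [if_neg (by omega), if_pos hij]
    congr 1
    omega
  · rw [if_pos (by omega), if_neg hij]

theorem Amat_apply_of_dvd {i j : Fin d} (hj : m ∣ (j : ℕ) + 1) :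
    Amat m d i j = (if (i : ℕ) = 0 then (-1) ^ ((j : ℕ) + 2) * Ee (j + 1) else 0) +
      if (i : ℕ) = j + 1 then 1 else 0 := by
  rw [Amat, if_neg (not_not.mpr hj)]
  simp only [Nat.add_eq_right, Nat.add_right_cancel_iff]
  split_ifs <;> first | omega | simp

theorem Amat_apply_eq_zero {i j : Fin d} (hij : (j : ℕ) + 1 < i) : Amat m d i j = 0 := by
  by_cases hj : m ∣ (j : ℕ) + 1
  · rw [Amat_apply_of_dvd hj, if_neg (by omega), if_neg (by omega), add_zero]
  · rw [Amat_apply_of_not_dvd hj, if_neg (by omega)]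

theorem Amat_apply_subdiagonal {i j : Fin d} (hij : (i : ℕ) = j + 1) : Amat m d i j = 1 := by
  by_cases hj : m ∣ (j : ℕ) + 1
  · rw [Amat_apply_of_dvd hj, if_neg (by omega), if_pos hij, zero_add]
  · rw [Amat_apply_of_not_dvd hj, if_pos hij.le, hij, Nat.sub_self, Hh, if_pos rfl]

theorem sum_coeff_kernelSeries_mul_Amat_of_dvd {j : Fin d} (hj : m ∣ (j : ℕ) + 1) :
    ∑ i : Fin (d + 1), (kernelSeries m).coeff i * Amat m (d + 1) i j.castSucc = 0 := by
  have sum_first_row (x : SymR) : ∑ i : Fin (d + 1), (kernelSeries m).coeff i *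
      (if (i : ℕ) = 0 then x else 0) = x := by
    rw [Fintype.sum_eq_single 0 fun i hi ↦ by rw [if_neg (Fin.val_ne_zero_iff.mpr hi), mul_zero],
      Fin.val_zero, if_pos rfl, coeff_zero_kernelSeries, one_mul]
  have sum_subdiagonal : ∑ i : Fin (d + 1), (kernelSeries m).coeff i *
      (if (i : ℕ) = j + 1 then 1 else 0) = (-1) ^ ((j : ℕ) + 1) * Ee (j + 1) := by
    rw [Fintype.sum_eq_single j.succ fun i hi ↦ by
        rw [← Fin.val_succ, if_neg (Fin.val_ne_of_ne hi), mul_zero],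
      Fin.val_succ, if_pos rfl, mul_one, coeff_kernelSeries_of_dvd hj]
  have hj' : m ∣ (j.castSucc : ℕ) + 1 := hj
  simp only [Amat_apply_of_dvd hj', mul_add, Finset.sum_add_distrib, Fin.val_castSucc,
    sum_first_row, sum_subdiagonal]
  ring

theorem sum_coeff_kernelSeries_mul_Amat_of_not_dvd {j : Fin d} (hj : ¬ m ∣ (j : ℕ) + 1) :
    ∑ i : Fin (d + 1), (kernelSeries m).coeff i * Amat m (d + 1) i j.castSucc = 0 := by
  have hj' : ¬ m ∣ (j.castSucc : ℕ) + 1 := hj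
  rw [← coeff_kernelSeries_mul_hSeries_of_not_dvd hj, PowerSeries.coeff_mul,
    Finset.Nat.sum_antidiagonal_eq_sum_range_succ_mk]
  simp only [Amat_apply_of_not_dvd hj', Fin.val_castSucc, hSeries, PowerSeries.coeff_mk, mul_ite,
    mul_zero]
  rw [Fin.sum_univ_eq_sum_range fun i ↦ if i ≤ (j : ℕ) + 1 then
      (kernelSeries m).coeff i * Hh (j + 1 - i) else 0, ← Finset.sum_filter]
  congr 1
  ext i
  simp only [Finset.mem_filter, Finset.mem_range]
  omega

theorem vecMul_coeff_kernelSeries (m d : ℕ) :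
    (fun i : Fin (d + 1) ↦ (kernelSeries m).coeff i) ᵥ*
      (Amat m (d + 1)).submatrix id Fin.castSucc = 0 := by
  ext1 j
  by_cases hj : m ∣ (j : ℕ) + 1
  · exact sum_coeff_kernelSeries_mul_Amat_of_dvd hj
  · exact sum_coeff_kernelSeries_mul_Amat_of_not_dvd hj

theorem det_Amat (m d : ℕ) : (Amat m d).det = (-1) ^ d * (kernelSeries m).coeff d := by
  have leading_block : Amat m d =
      ((Amat m (d + 1)).submatrix id Fin.castSucc).submatrix Fin.castSucc id := rfl
  rw [leading_block, det_submatrix_castSucc_of_hessenberg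
    (v := fun i ↦ (kernelSeries m).coeff i) ?_ ?_ coeff_zero_kernelSeries
    (vecMul_coeff_kernelSeries m d), Fin.val_last]
  · intro i j hij
    exact Amat_apply_eq_zero (Fin.lt_def.mp hij)
  · intro j
    exact Amat_apply_subdiagonal (Fin.val_succ j)

theorem coeff_expVec_det_Amat_add (μ : List ℕ) (n : ℕ) {t : ℕ} (ht : m ∣ t) :
    coeff (expVec μ t) (Amat m (n + t)).det =
      (-1) ^ n * coeff (Multiset.toFinsupp (μ : Multiset ℕ)) (eFreePart m n) := by
  rw [det_Amat, coeff_neg_one_pow_mul, coeff_expVec_coeff_kernelSeries μ n ht, pow_add,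
    mul_assoc, ← mul_assoc ((-1) ^ t), ← mul_pow, neg_one_mul, neg_neg, one_pow, one_mul]

end AmatDeterminant

theorem stmt4 {m : ℕ} (hm : 0 < m) (n : ℕ) (hn : 1 ≤ n) (μ : List ℕ)
    (hμ : IsPartitionL μ) (hμn : μ.sum = n) (r : ℕ) :
    MvPolynomial.coeff (expVec μ (r * m)) (Amat m (n + r * m)).det =
      MvPolynomial.coeff (expVec μ 0) (Amat m n).det := by
  rw [coeff_expVec_det_Amat_add μ n (dvd_mul_left m r)]
  exact (coeff_expVec_det_Amat_add μ n (dvd_zero m)).symm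
end
end

section
/- Let m be a positive integer. For every n ≥ 0, in the ring Γ^(m) we have e_n = ∑_{μ ∈ P(n;m)} d_μ h_μ e_{n−|μ|}, where d_μ = −ε_μ · ∑_{A ∈ W(μ)} (−1)^{len(A)} c_A (and e_0 is interpreted as 1). -/
noncomputable section

open MvPolynomial

/-- Membership of `A = (δ^(1), …, δ^(r), ξ)` in `W(λ)`: a nonempty finite sequence of
partitions whose parts taken together rearrange to `λ`, and all terms except possibly the
last one are nonempty with size divisible by `m`.  Here `len(A) = A.length = r + 1`. -/
def Wmem (m : ℕ) (lam : List ℕ) (A : List (List ℕ)) : Prop :=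
  A ≠ [] ∧ (∀ l ∈ A, IsPartitionL l) ∧ (∀ l ∈ A.dropLast, l ≠ [] ∧ m ∣ l.sum) ∧
  List.Perm A.flatten lam

/-- `c_A = c_{δ^(1)} ⋯ c_{δ^(r)} ⋅ c_ξ`. -/
def cAprod (A : List (List ℕ)) : ℕ := (A.map numComp).prod

/-- `d_μ = -ε_μ ⋅ ∑_{A ∈ W(μ)} (-1)^{len(A)} c_A`. -/
def dCoef (m : ℕ) (μ : List ℕ) : ℤ :=
  -epsL μ * ∑ᶠ A ∈ {A : List (List ℕ) | Wmem m μ A}, (-1 : ℤ) ^ A.length * (cAprod A : ℤ)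

/-!
Write `H(-t) = ∑ (-1)^i h_i t^i`, `E(t) = ∑ e_i t^i`, and let `K = H(-t)⁻¹`, whose coefficients are
signed sums of the `h_α` over compositions `α`. The relations of `Γ^(m)` say that `F = H(-t) E(t)`
only involves powers of `t ^ m`, so taking the part supported on multiples of `m` of `E = F K` gives
`E₀ = F K₀`. Hence `E = E₀ (K / K₀)`. Expanding `K₀⁻¹` geometrically writes `K / K₀` as an
alternating sum over words of nonempty blocks of size divisible by `m` followed by one arbitrary
block, and sorting these by the multiset of all parts identifies the coefficient of `h_μ` with
`d_μ`.
-/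

open Finset
open scoped PowerSeries

section Words

variable {α : Type*} [DecidableEq α]

/-- The words of degree `n` over a graded alphabet whose letters of degree `d` form `P d`.
Letters of degree zero are discarded, so that there are finitely many words of each degree. -/
def wordsOfDegree (P : ℕ → Finset α) : ℕ → Finset (List α)
  | 0 => {[]}
  | n + 1 => univ.biUnion fun i : Fin (n + 1) =>
      (P (n + 1 - i) ×ˢ wordsOfDegree P i).image fun q => q.1 :: q.2

/-- The generating function by degree of the words over the graded alphabet `P`, a word being
weighted by the product of the weights `w` of its letters. -/
def wordSeries {S : Type*} [Ring S] (P : ℕ → Finset α) (w : α → S) : S⟦X⟧ :=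
  PowerSeries.mk fun n => ∑ l ∈ wordsOfDegree P n, (l.map w).prod

variable {P : ℕ → Finset α} {deg : α → ℕ}

lemma mem_wordsOfDegree (hP : ∀ d, ∀ x ∈ P d, deg x = d) {n : ℕ} {l : List α} :
    l ∈ wordsOfDegree P n ↔ (∀ x ∈ l, 0 < deg x ∧ x ∈ P (deg x)) ∧ (l.map deg).sum = n := by
  induction l generalizing n with
  | nil => cases n <;> simp [wordsOfDegree]
  | cons x l ih =>
    cases n with
    | zero => simp +contextual [wordsOfDegree, Nat.pos_iff_ne_zero]
    | succ n =>
      have cons_mem : x :: l ∈ wordsOfDegree P (n + 1) ↔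
          ∃ i : Fin (n + 1), x ∈ P (n + 1 - i) ∧ l ∈ wordsOfDegree P i := by
        simp [wordsOfDegree]
      simp only [cons_mem, ih, List.forall_mem_cons, List.map_cons, List.sum_cons]
      constructor
      · rintro ⟨i, hx, hl, hsum⟩
        have hdeg := hP _ x hx
        exact ⟨⟨⟨by omega, hdeg ▸ hx⟩, hl⟩, by omega⟩
      · rintro ⟨⟨⟨hpos, hx⟩, hl⟩, hsum⟩
        refine ⟨⟨(l.map deg).sum, by omega⟩, ?_, hl, rfl⟩
        rwa [show n + 1 - (l.map deg).sum = deg x by omega]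

lemma sum_wordsOfDegree_succ {M : Type*} [AddCommMonoid M] (hP : ∀ d, ∀ x ∈ P d, deg x = d)
    (f : List α → M) (n : ℕ) :
    ∑ l ∈ wordsOfDegree P (n + 1), f l =
      ∑ p ∈ antidiagonal n, ∑ x ∈ P (p.1 + 1), ∑ l ∈ wordsOfDegree P p.2, f (x :: l) := by
  have cons_injective : Function.Injective fun q : α × List α => q.1 :: q.2 := by
    rintro ⟨x, l⟩ ⟨y, k⟩ h
    simpa using h
  rw [wordsOfDegree, sum_biUnion, ← Nat.sum_antidiagonal_swap,
    Nat.sum_antidiagonal_eq_sum_range_succ_mk, ← Fin.sum_univ_eq_sum_range]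
  · refine sum_congr rfl fun i _ => ?_
    rw [sum_image cons_injective.injOn, sum_product, Nat.sub_add_comm (Nat.le_of_lt_succ i.2)]
    rfl
  · intro i _ j _ hij
    rw [Function.onFun, disjoint_left]
    simp only [mem_image, mem_product, Prod.exists]
    rintro _ ⟨x, l, ⟨hx, -⟩, rfl⟩ ⟨y, k, ⟨hy, -⟩, heq⟩
    obtain ⟨rfl, rfl⟩ := List.cons.inj heq
    have hdeg := (hP _ _ hx).symm.trans (hP _ _ hy)
    exact hij (Fin.ext (by omega))

-- The geometric series `(1 - ∑ w x t ^ deg x)⁻¹`, the sum running over the letters `x`.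
lemma mul_wordSeries_eq_one {S : Type*} [Ring S] (hP : ∀ d, ∀ x ∈ P d, deg x = d) {w : α → S}
    {L : S⟦X⟧} (hL_zero : PowerSeries.coeff 0 L = 1)
    (hL_succ : ∀ d, PowerSeries.coeff (d + 1) L = -∑ x ∈ P (d + 1), w x) :
    L * wordSeries P w = 1 := by
  ext n
  rw [PowerSeries.coeff_mul, PowerSeries.coeff_one]
  cases n with
  | zero => simpa [wordSeries, wordsOfDegree] using hL_zero
  | succ n =>
    rw [Nat.sum_antidiagonal_succ, hL_zero, one_mul, if_neg n.succ_ne_zero, add_eq_zero_iff_eq_neg,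
      ← sum_neg_distrib]
    simp only [wordSeries, PowerSeries.coeff_mk, sum_wordsOfDegree_succ hP, List.map_cons,
      List.prod_cons]
    simp [hL_succ, sum_mul_sum]

end Words

section DvdSection

variable {S : Type*} [Semiring S]

/-- The part of the power series `F` supported on the exponents divisible by `m`. -/
def dvdSection (m : ℕ) (F : S⟦X⟧) : S⟦X⟧ :=
  PowerSeries.mk fun i => if m ∣ i then PowerSeries.coeff i F else 0

lemma coeff_dvdSection (m i : ℕ) (F : S⟦X⟧) :
    PowerSeries.coeff i (dvdSection m F) = if m ∣ i then PowerSeries.coeff i F else 0 :=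
  PowerSeries.coeff_mk _ _

lemma dvdSection_mul_of_coeff_eq_zero {m : ℕ} {F : S⟦X⟧}
    (hF : ∀ d, ¬ m ∣ d → PowerSeries.coeff d F = 0) (K : S⟦X⟧) :
    dvdSection m (F * K) = F * dvdSection m K := by
  ext d
  rw [coeff_dvdSection, PowerSeries.coeff_mul, PowerSeries.coeff_mul, ite_sum_zero]
  refine sum_congr rfl fun p hp => ?_
  rw [coeff_dvdSection, ← HasAntidiagonal.mem_antidiagonal.1 hp]
  by_cases hdvd : m ∣ p.1
  · simp [Nat.dvd_add_right hdvd]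
  · simp [hF _ hdvd]

end DvdSection

/-- The compositions of `j`, as lists. -/
def compositionLists (j : ℕ) : Finset (List ℕ) := wordsOfDegree (fun d => {d}) j

/-- The partitions of `j`, as weakly decreasing lists. -/
def partitionLists (j : ℕ) : Finset (List ℕ) :=
  (compositionLists j).filter (·.Pairwise (· ≥ ·))

lemma mem_compositionLists {j : ℕ} {l : List ℕ} :
    l ∈ compositionLists j ↔ (∀ x ∈ l, 0 < x) ∧ l.sum = j := by
  simp [compositionLists, mem_wordsOfDegree (deg := id)]

lemma mem_partitionLists {j : ℕ} {l : List ℕ} :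
    l ∈ partitionLists j ↔ IsPartitionL l ∧ l.sum = j := by
  rw [partitionLists, mem_filter, mem_compositionLists, IsPartitionL]
  tauto

lemma compositionLists_zero : compositionLists 0 = {[]} := by
  rw [compositionLists, wordsOfDegree]

lemma sum_eq_sum_partitionLists {ι M : Type*} [AddCommMonoid M] {j : ℕ} {s : Finset ι}
    {f : ι → List ℕ} (hf : ∀ i ∈ s, f i ∈ compositionLists j) (g : ι → M) :
    ∑ i ∈ s, g i = ∑ μ ∈ partitionLists j, ∑ i ∈ s with (f i).Perm μ, g i := by
  let sort (l : List ℕ) : List ℕ := l.insertionSort (· ≥ ·)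
  have sort_perm (l : List ℕ) : (sort l).Perm l := List.perm_insertionSort _ l
  have sort_mem (i) (hi : i ∈ s) : sort (f i) ∈ partitionLists j := by
    obtain ⟨hpos, hsum⟩ := mem_compositionLists.1 (hf i hi)
    exact mem_partitionLists.2 ⟨⟨List.pairwise_insertionSort _ _,
      fun x hx => hpos x ((sort_perm _).mem_iff.1 hx)⟩, (sort_perm _).sum_eq.trans hsum⟩
  rw [← sum_fiberwise_of_maps_to sort_mem]
  refine sum_congr rfl fun μ hμ => sum_congr (filter_congr fun i _ => ?_) fun _ _ => rfl
  constructor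
  · rintro rfl
    exact (sort_perm _).symm
  · exact fun hperm => ((sort_perm _).trans hperm).eq_of_pairwise'
      (List.pairwise_insertionSort _ _) (mem_partitionLists.1 hμ).1.1

lemma numComp_eq_card {j : ℕ} {μ : List ℕ} (hμ : μ ∈ partitionLists j) :
    numComp μ = #{α ∈ compositionLists j | α.Perm μ} := by
  rw [numComp, ← List.card_toFinset]
  congr 1
  ext α
  obtain ⟨⟨-, hpos⟩, hsum⟩ := mem_partitionLists.1 hμ
  simp only [List.mem_toFinset, List.mem_permutations, mem_filter, mem_compositionLists]
  exact ⟨fun hperm => ⟨⟨fun x hx => hpos x (hperm.mem_iff.1 hx), hperm.sum_eq.trans hsum⟩, hperm⟩,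
    And.right⟩

/-- The partitions of `j` if `m ∣ j`, and none otherwise. Words over this alphabet are the sequences
`δ^(1), …, δ^(r)` of nonempty blocks that precede the last block `ξ` of an element of `W(λ)`. -/
def dvdBlocks (m j : ℕ) : Finset (List ℕ) := if m ∣ j then partitionLists j else ∅

lemma mem_dvdBlocks {m j : ℕ} {δ : List ℕ} :
    δ ∈ dvdBlocks m j ↔ m ∣ j ∧ IsPartitionL δ ∧ δ.sum = j := by
  rw [dvdBlocks]
  split_ifs with hdvd <;> simp [hdvd, mem_partitionLists]

lemma sum_eq_of_mem_dvdBlocks (m d : ℕ) : ∀ δ ∈ dvdBlocks m d, δ.sum = d :=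
  fun _ hδ => (mem_dvdBlocks.1 hδ).2.2

/-- The union of the sets `W(λ)` over all partitions `λ` of `j`. -/
def blockSequences (m j : ℕ) : Finset (List (List ℕ)) :=
  ((antidiagonal j).sigma fun p => wordsOfDegree (dvdBlocks m) p.1 ×ˢ partitionLists p.2).image
    fun t => t.2.1 ++ [t.2.2]

lemma IsPartitionL.sum_pos_iff {δ : List ℕ} (hδ : IsPartitionL δ) : 0 < δ.sum ↔ δ ≠ [] := by
  cases δ with
  | nil => simp
  | cons a l => simp [Nat.add_pos_left (hδ.2 a List.mem_cons_self)]

lemma mem_wordsOfDegree_dvdBlocks {m j : ℕ} {Δ : List (List ℕ)} :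
    Δ ∈ wordsOfDegree (dvdBlocks m) j ↔
      (∀ δ ∈ Δ, IsPartitionL δ ∧ δ ≠ [] ∧ m ∣ δ.sum) ∧ Δ.flatten.sum = j := by
  rw [mem_wordsOfDegree (sum_eq_of_mem_dvdBlocks m), List.sum_flatten]
  refine and_congr_left fun _ => forall₂_congr fun δ _ => ?_
  rw [mem_dvdBlocks]
  constructor
  · rintro ⟨hpos, hdvd, hpart, -⟩
    exact ⟨hpart, hpart.sum_pos_iff.1 hpos, hdvd⟩
  · rintro ⟨hpart, hne, hdvd⟩
    exact ⟨hpart.sum_pos_iff.2 hne, hdvd, hpart, rfl⟩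

lemma mem_blockSequences {m j : ℕ} {A : List (List ℕ)} :
    A ∈ blockSequences m j ↔ Wmem m A.flatten A ∧ A.flatten.sum = j := by
  rcases A.eq_nil_or_concat' with rfl | ⟨Δ, ξ, rfl⟩
  · simp [blockSequences, Wmem]
  · have concat_mem : Δ ++ [ξ] ∈ blockSequences m j ↔ ∃ p ∈ antidiagonal j,
        Δ ∈ wordsOfDegree (dvdBlocks m) p.1 ∧ ξ ∈ partitionLists p.2 := by
      simp [blockSequences]
    simp only [concat_mem, mem_wordsOfDegree_dvdBlocks, mem_partitionLists,
      HasAntidiagonal.mem_antidiagonal, Wmem, List.dropLast_concat, List.flatten_concat,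
      List.sum_append, List.mem_append, List.mem_singleton]
    constructor
    · rintro ⟨p, hp, ⟨hΔ, hΔsum⟩, hξ, hξsum⟩
      refine ⟨⟨by simp, ?_, fun δ hδ => (hΔ δ hδ).2, .rfl⟩, by omega⟩
      rintro δ (hδ | rfl)
      exacts [(hΔ δ hδ).1, hξ]
    · rintro ⟨⟨-, hpart, hdvd, -⟩, hsum⟩
      exact ⟨(Δ.flatten.sum, ξ.sum), hsum, ⟨fun δ hδ => ⟨hpart δ (.inl hδ), hdvd δ hδ⟩, rfl⟩,
        hpart ξ (.inr rfl), rfl⟩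

lemma sum_blockSequences {M : Type*} [AddCommMonoid M] (m j : ℕ) (f : List (List ℕ) → M) :
    ∑ A ∈ blockSequences m j, f A = ∑ p ∈ antidiagonal j,
      ∑ Δ ∈ wordsOfDegree (dvdBlocks m) p.1, ∑ ξ ∈ partitionLists p.2, f (Δ ++ [ξ]) := by
  rw [blockSequences, sum_image, sum_sigma]
  · simp only [sum_product]
  · rintro ⟨p, Δ, ξ⟩ hp ⟨q, Δ', ξ'⟩ hq heq
    obtain ⟨rfl, hlast⟩ := List.append_inj' heq rfl
    obtain rfl := List.singleton_injective hlast
    simp only [coe_sigma, Set.mem_sigma_iff, mem_coe, mem_product,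
      mem_wordsOfDegree_dvdBlocks, mem_partitionLists] at hp hq
    have hpq : p = q := Prod.ext (hp.2.1.2.symm.trans hq.2.1.2) (hp.2.2.2.symm.trans hq.2.2.2)
    rw [hpq]

lemma dCoef_eq_sum_blockSequences (m : ℕ) {j : ℕ} {μ : List ℕ} (hμ : μ.sum = j) :
    dCoef m μ = -epsL μ *
      ∑ A ∈ blockSequences m j with A.flatten.Perm μ, (-1) ^ A.length * (cAprod A : ℤ) := by
  have hW : {A | Wmem m μ A} = ({A ∈ blockSequences m j | A.flatten.Perm μ} : Finset _) := by
    ext A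
    simp only [Set.mem_ofPred_eq, coe_filter, mem_blockSequences, Wmem]
    constructor
    · rintro ⟨hne, hpart, hdvd, hperm⟩
      exact ⟨⟨⟨hne, hpart, hdvd, .rfl⟩, hperm.sum_eq.trans hμ⟩, hperm⟩
    · rintro ⟨⟨⟨hne, hpart, hdvd, -⟩, -⟩, hperm⟩
      exact ⟨hne, hpart, hdvd, hperm⟩
  rw [dCoef, hW, finsum_mem_coe_finset]

lemma flatten_mem_compositionLists {m j : ℕ} {A : List (List ℕ)} (hA : A ∈ blockSequences m j) :
    A.flatten ∈ compositionLists j := by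
  obtain ⟨⟨-, hpart, -⟩, hsum⟩ := mem_blockSequences.1 hA
  refine mem_compositionLists.2 ⟨fun x hx => ?_, hsum⟩
  obtain ⟨δ, hδ, hx⟩ := List.mem_flatten.1 hx
  exact (hpart δ hδ).2 x hx

lemma finsum_mem_memPnm {M : Type*} [AddCommMonoid M] (n m : ℕ) (f : List ℕ → M) :
    ∑ᶠ μ ∈ {μ | MemPnm n m μ}, f μ =
      ∑ p ∈ antidiagonal n with m ∣ p.2, ∑ μ ∈ partitionLists p.1, f μ := by
  have hset : {μ | MemPnm n m μ} =
      ({p ∈ antidiagonal n | m ∣ p.2}.biUnion fun p => partitionLists p.1 : Finset _) := by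
    ext μ
    simp only [Set.mem_ofPred_eq, MemPnm, coe_biUnion, Set.mem_iUnion, mem_coe, mem_filter,
      HasAntidiagonal.mem_antidiagonal, mem_partitionLists, exists_prop]
    constructor
    · rintro ⟨hpart, hle, hdvd⟩
      exact ⟨(μ.sum, n - μ.sum), ⟨Nat.add_sub_cancel' hle, hdvd⟩, hpart, rfl⟩
    · rintro ⟨p, ⟨hp, hdvd⟩, hpart, hsum⟩
      exact ⟨hpart, by omega, by rwa [show n - μ.sum = p.2 by omega]⟩
  rw [hset, finsum_mem_coe_finset, sum_biUnion]
  intro p hp q hq hpq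
  rw [Function.onFun, disjoint_left]
  intro μ hμp hμq
  have hfst : p.1 = q.1 := (mem_partitionLists.1 hμp).2.symm.trans (mem_partitionLists.1 hμq).2
  exact hpq (HasAntidiagonal.antidiagonal_congr (mem_filter.1 hp).1 (mem_filter.1 hq).1 |>.2 hfst)

lemma epsL_eq_neg_one_pow {l : List ℕ} (hl : ∀ x ∈ l, 0 < x) :
    epsL l = (-1) ^ (l.sum + l.length) := by
  have hlen : l.length ≤ l.sum := List.length_le_sum_of_one_le l hl
  exact neg_one_pow_congr (by rw [Nat.even_sub hlen, Nat.even_add])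

section Series

variable {S : Type*} [CommRing S] (h : ℕ → S)

/-- The signed product `∏ (-1) ^ (aᵢ + 1) h_{aᵢ}` over the parts of a list, which is `ε_α h_α` when
the parts are positive. -/
def signedProd (l : List ℕ) : S := (l.map fun a => (-1) ^ (a + 1) * h a).prod

/-- The power series `∑ ε_α h_α t ^ |α|` over all compositions `α`, which is the inverse of
`∑ (-1) ^ i h_i t ^ i` when `h_0 = 1`. -/
def compositionSeries : S⟦X⟧ :=
  wordSeries (fun d => {d}) fun a => (-1) ^ (a + 1) * h a

/-- The signed contribution `-c_δ ε_δ h_δ` of a block `δ` to a word of blocks. -/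
def blockWeight (δ : List ℕ) : S := -(numComp δ * signedProd h δ)

lemma signedProd_eq_epsL_mul {l : List ℕ} (hl : ∀ x ∈ l, 0 < x) :
    signedProd h l = epsL l * (l.map h).prod := by
  have sign_prod : (l.map fun a => (-1 : S) ^ (a + 1)).prod = (-1) ^ (l.sum + l.length) := by
    clear hl
    induction l with
    | nil => simp
    | cons a l ih =>
      rw [List.map_cons, List.prod_cons, ih, List.sum_cons, List.length_cons]
      ring
  rw [signedProd, List.prod_map_mul, sign_prod, epsL_eq_neg_one_pow hl]
  push_cast
  rfl

lemma coeff_compositionSeries (j : ℕ) :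
    PowerSeries.coeff j (compositionSeries h) = ∑ α ∈ compositionLists j, signedProd h α := by
  rw [compositionSeries, wordSeries, PowerSeries.coeff_mk]
  rfl

lemma coeff_compositionSeries_eq_neg_sum_blockWeight (j : ℕ) :
    PowerSeries.coeff j (compositionSeries h) = -∑ μ ∈ partitionLists j, blockWeight h μ := by
  rw [coeff_compositionSeries, sum_eq_sum_partitionLists (f := id) (fun _ hα => hα),
    ← sum_neg_distrib]
  refine sum_congr rfl fun μ hμ => ?_
  have hconst : ∀ α ∈ (compositionLists j).filter (·.Perm μ), signedProd h α = signedProd h μ :=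
    fun α hα => ((mem_filter.1 hα).2.map _).prod_eq
  simp only [id, sum_congr rfl hconst, sum_const, blockWeight, numComp_eq_card hμ, neg_neg,
    nsmul_eq_mul]

lemma coeff_zero_compositionSeries : PowerSeries.coeff 0 (compositionSeries h) = 1 := by
  simp [coeff_compositionSeries, compositionLists_zero, signedProd]

variable {h} in
lemma rescale_mul_compositionSeries (h_zero : h 0 = 1) :
    PowerSeries.rescale (-1) (PowerSeries.mk h) * compositionSeries h = 1 :=
  mul_wordSeries_eq_one (deg := id) (by simp) (by simp [h_zero]) (by simp [pow_succ])

lemma dvdSection_compositionSeries_mul_wordSeries (m : ℕ) :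
    dvdSection m (compositionSeries h) * wordSeries (dvdBlocks m) (blockWeight h) = 1 := by
  refine mul_wordSeries_eq_one (sum_eq_of_mem_dvdBlocks m) ?_ fun d => ?_
  · rw [coeff_dvdSection, if_pos (dvd_zero m), coeff_zero_compositionSeries]
  · rw [coeff_dvdSection, coeff_compositionSeries_eq_neg_sum_blockWeight, dvdBlocks]
    split_ifs <;> simp

lemma coeff_wordSeries_mul_compositionSeries (m j : ℕ) :
    PowerSeries.coeff j (wordSeries (dvdBlocks m) (blockWeight h) * compositionSeries h) =
      -∑ A ∈ blockSequences m j, (A.map (blockWeight h)).prod := by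
  rw [PowerSeries.coeff_mul, sum_blockSequences, ← sum_neg_distrib]
  refine sum_congr rfl fun p _ => ?_
  rw [coeff_compositionSeries_eq_neg_sum_blockWeight, mul_neg, wordSeries, PowerSeries.coeff_mk,
    sum_mul_sum]
  simp

lemma prod_map_blockWeight (A : List (List ℕ)) :
    (A.map (blockWeight h)).prod = (-1) ^ A.length * cAprod A * signedProd h A.flatten := by
  induction A with
  | nil => simp [cAprod, signedProd]
  | cons δ A ih =>
    simp only [List.map_cons, List.prod_cons, ih, blockWeight, cAprod, signedProd,
      List.flatten_cons, List.map_append, List.prod_append, List.length_cons]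
    push_cast
    ring

lemma coeff_wordSeries_mul_compositionSeries_eq_sum_dCoef (m j : ℕ) :
    PowerSeries.coeff j (wordSeries (dvdBlocks m) (blockWeight h) * compositionSeries h) =
      ∑ μ ∈ partitionLists j, dCoef m μ * (μ.map h).prod := by
  rw [coeff_wordSeries_mul_compositionSeries,
    sum_eq_sum_partitionLists (fun _ => flatten_mem_compositionLists), ← sum_neg_distrib]
  refine sum_congr rfl fun μ hμ => ?_
  obtain ⟨⟨-, hpos⟩, hsum⟩ := mem_partitionLists.1 hμ
  rw [dCoef_eq_sum_blockSequences m hsum]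
  push_cast
  rw [neg_mul, neg_mul, neg_inj, mul_sum, sum_mul]
  refine sum_congr rfl fun A hA => ?_
  have hperm : signedProd h A.flatten = signedProd h μ := ((mem_filter.1 hA).2.map _).prod_eq
  rw [prod_map_blockWeight, hperm, signedProd_eq_epsL_mul h hpos]
  ring

variable {h} {e : ℕ → S} {m : ℕ}

lemma mk_eq_wordSeries_mul_dvdSection (h_zero : h 0 = 1)
    (hrel : ∀ d, ¬ m ∣ d → ∑ p ∈ antidiagonal d, (-1) ^ p.1 * h p.1 * e p.2 = 0) :
    PowerSeries.mk e = wordSeries (dvdBlocks m) (blockWeight h) * compositionSeries h *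
      dvdSection m (PowerSeries.mk e) := by
  let E := PowerSeries.mk e
  let K := compositionSeries h
  let D := wordSeries (dvdBlocks m) (blockWeight h)
  let F := PowerSeries.rescale (-1) (PowerSeries.mk h) * E
  have hF (d : ℕ) (hd : ¬ m ∣ d) : PowerSeries.coeff d F = 0 := by
    simpa [F, E, PowerSeries.coeff_mul] using hrel d hd
  have hFK : F * K = E := by
    rw [mul_right_comm, rescale_mul_compositionSeries h_zero, one_mul]
  have hE₀ : dvdSection m E = F * dvdSection m K := by
    rw [← hFK, dvdSection_mul_of_coeff_eq_zero hF]
  calc E = (dvdSection m K * D) * (F * K) := by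
        rw [dvdSection_compositionSeries_mul_wordSeries, one_mul, hFK]
    _ = D * K * (F * dvdSection m K) := by ring
    _ = D * K * dvdSection m E := by rw [hE₀]

end Series

lemma sum_antidiagonal_gmk_eq_zero {m d : ℕ} (hd : ¬ m ∣ d) :
    ∑ p ∈ antidiagonal d, (-1) ^ p.1 * gmk m (Hh p.1) * gmk m (Ee p.2) = 0 := by
  have hd_pos : 0 < d := Nat.pos_of_ne_zero fun h => hd (h ▸ dvd_zero m)
  have htrunc : gmk m (truncRel d) = 0 :=
    Ideal.Quotient.eq_zero_iff_mem.2 (Ideal.subset_span ⟨d, hd_pos, hd, rfl⟩)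
  simpa [truncRel, Nat.sum_antidiagonal_eq_sum_range_succ_mk] using htrunc

lemma gmk_hprod (m : ℕ) (l : List ℕ) :
    gmk m (hprod l) = (l.map fun i => gmk m (Hh i)).prod := by
  rw [hprod, map_list_prod, List.map_map]
  rfl

theorem stmt5_general {S : Type*} [CommRing S] {h e : ℕ → S} {m : ℕ} (h_zero : h 0 = 1)
    (hrel : ∀ d, ¬ m ∣ d → ∑ p ∈ antidiagonal d, (-1) ^ p.1 * h p.1 * e p.2 = 0) (n : ℕ) :
    e n = ∑ᶠ μ ∈ {μ | MemPnm n m μ}, dCoef m μ • ((μ.map h).prod * e (n - μ.sum)) := by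
  have hcoeff := congrArg (PowerSeries.coeff n) (mk_eq_wordSeries_mul_dvdSection h_zero hrel)
  rw [PowerSeries.coeff_mk, PowerSeries.coeff_mul] at hcoeff
  rw [hcoeff, finsum_mem_memPnm, sum_filter]
  refine sum_congr rfl fun p hp => ?_
  rw [coeff_wordSeries_mul_compositionSeries_eq_sum_dCoef, coeff_dvdSection, PowerSeries.coeff_mk,
    mul_ite, mul_zero, sum_mul]
  refine if_congr Iff.rfl (sum_congr rfl fun μ hμ => ?_) rfl
  have hsnd : n - μ.sum = p.2 := by
    rw [(mem_partitionLists.1 hμ).2, ← HasAntidiagonal.mem_antidiagonal.1 hp,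
      Nat.add_sub_cancel_left]
  rw [hsnd, zsmul_eq_mul, mul_assoc]

theorem stmt5 {m : ℕ} (hm : 0 < m) (n : ℕ) :
    gmk m (Ee n) =
      ∑ᶠ μ ∈ {μ : List ℕ | MemPnm n m μ}, dCoef m μ • gmk m (hprod μ * Ee (n - μ.sum)) := by
  simpa only [map_mul, gmk_hprod] using
    stmt5_general (e := fun i => gmk m (Ee i)) (by simp [Hh])
      (fun _ => sum_antidiagonal_gmk_eq_zero) n
end
end

section
/- Let m be a positive integer and λ a partition. Then c_λ^(m) = ∑_{A ∈ W(λ)} (−1)^{len(A)+1} c_A. -/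
noncomputable section

/-!
Replacing each partition in `A ∈ W(λ)` by an arbitrary rearrangement turns `c_A` into a count, so
the right-hand side is the sum of `(-1) ^ r` over all ways of cutting a composition of type `λ` into
`r + 1` blocks such that all blocks but the last are nonempty with sum divisible by `m`. For a fixed
composition with some nonempty prefix of sum divisible by `m`, let `u` be the shortest one, and let
`v` be the rest. A cutting of `u ++ v` arises from a unique cutting of `v`, either by putting `u` in
front as a separate block or by merging `u` into the first block, and the two have opposite signs.
If there is no such prefix, only the trivial cutting into one block remains.

The cancellation uses only one property of divisibility of the sum: if it holds for `a`, then it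
holds for `a ++ b` exactly when it holds for `b`.
-/

section Splittings

variable {α : Type*} {P : List α → Prop}

/-- A nonempty sequence of blocks, all of which except possibly the last are nonempty and satisfy
`P`. With `P b` saying that `m` divides the sum of `b`, this is the condition on the sizes of the
terms of `A ∈ W(λ)`. -/
def IsBlockSeq (P : List α → Prop) (B : List (List α)) : Prop :=
  B ≠ [] ∧ ∀ b ∈ B.dropLast, b ≠ [] ∧ P b

lemma isBlockSeq_singleton (b : List α) : IsBlockSeq P [b] := by simp [IsBlockSeq]

lemma isBlockSeq_cons_cons {b c : List α} {B : List (List α)} :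
    IsBlockSeq P (b :: c :: B) ↔ (b ≠ [] ∧ P b) ∧ IsBlockSeq P (c :: B) := by
  simp [IsBlockSeq]

lemma IsBlockSeq.cons {u : List α} {B : List (List α)} (hu : u ≠ []) (hPu : P u)
    (hB : IsBlockSeq P B) : IsBlockSeq P (u :: B) := by
  obtain ⟨c, C, rfl⟩ := List.exists_cons_of_ne_nil hB.1
  exact isBlockSeq_cons_cons.2 ⟨⟨hu, hPu⟩, hB⟩

lemma IsBlockSeq.modifyHead_append (hP : ∀ a b, P a → (P (a ++ b) ↔ P b)) {u : List α}
    {B : List (List α)} (hPu : P u) (hB : IsBlockSeq P B) :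
    IsBlockSeq P (B.modifyHead (u ++ ·)) := by
  match B, hB with
  | [c], _ => exact isBlockSeq_singleton _
  | c :: e :: C, hB =>
    obtain ⟨⟨hc, hPc⟩, hC⟩ := isBlockSeq_cons_cons.1 hB
    exact isBlockSeq_cons_cons.2 ⟨⟨by simp [hc], (hP u c hPu).2 hPc⟩, hC⟩

lemma IsBlockSeq.length_le {B : List (List α)} (hB : IsBlockSeq P B) :
    B.length ≤ B.flatten.length + 1 := by
  match B, hB with
  | [b], _ => simp
  | b :: c :: C, hB =>
    obtain ⟨⟨hb, -⟩, hC⟩ := isBlockSeq_cons_cons.1 hB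
    have length_pos := List.length_pos_iff.2 hb
    have length_tail_le := hC.length_le
    simp only [List.flatten_cons, List.length_append, List.length_cons] at length_tail_le ⊢
    omega

lemma finite_setOf_forall_mem_and_length_le {s : Set α} (hs : s.Finite) (n : ℕ) :
    {l : List α | (∀ x ∈ l, x ∈ s) ∧ l.length ≤ n}.Finite := by
  have := hs.to_subtype
  refine ((List.finite_length_le s n).image (List.map (↑))).subset ?_
  rintro l ⟨hl, hn⟩
  obtain ⟨k, rfl⟩ : l ∈ Set.range (List.map ((↑) : s → α)) := by
    rwa [Set.range_list_map_coe]
  exact ⟨k, by simpa using hn, rfl⟩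

lemma finite_setOf_isBlockSeq_and_flatten_eq (P : List α → Prop) (d : List α) :
    {B | IsBlockSeq P B ∧ B.flatten = d}.Finite := by
  refine (finite_setOf_forall_mem_and_length_le d.sublists.finite_toSet (d.length + 1)).subset ?_
  rintro B ⟨hB, rfl⟩
  exact ⟨fun b hb => List.mem_sublists.2 (List.sublist_flatten_of_mem hb), hB.length_le⟩

/-- The ways of cutting `d` into consecutive blocks, all of which except possibly the last are
nonempty and satisfy `P`. -/
def splittings (P : List α → Prop) (d : List α) : Finset (List (List α)) :=
  (finite_setOf_isBlockSeq_and_flatten_eq P d).toFinset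

@[simp]
lemma mem_splittings {d : List α} {B : List (List α)} :
    B ∈ splittings P d ↔ IsBlockSeq P B ∧ B.flatten = d := by
  simp [splittings]

lemma splittings_eq_singleton {d : List α} (hd : ∀ p, p <+: d → p ≠ [] → ¬ P p) :
    splittings P d = {[d]} := by
  ext B
  rw [mem_splittings, Finset.mem_singleton]
  constructor
  · rintro ⟨hB, rfl⟩
    match B, hB with
    | [b], _ => simp
    | b :: c :: C, hB =>
      obtain ⟨⟨hb, hPb⟩, -⟩ := isBlockSeq_cons_cons.1 hB
      exact absurd hPb (hd b (List.prefix_append _ _) hb)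
  · rintro rfl
    exact ⟨isBlockSeq_singleton d, by simp⟩

lemma exists_shortest_prefix {d p : List α} (hpd : p <+: d) (hp : p ≠ []) (hPp : P p) :
    ∃ u v, u ++ v = d ∧ u ≠ [] ∧ P u ∧ ∀ q, q <+: u → q ≠ [] → P q → q = u := by
  obtain ⟨u, ⟨⟨v, huv⟩, hu, hPu⟩, hmin⟩ := (measure List.length).wf.has_min
    {q : List α | q <+: d ∧ q ≠ [] ∧ P q} ⟨p, hpd, hp, hPp⟩
  refine ⟨u, v, huv, hu, hPu, fun q hqu hq hPq => hqu.eq_of_length_le ?_⟩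
  exact not_lt.1 (hmin q ⟨hqu.trans ⟨v, huv⟩, hq, hPq⟩)

lemma modifyHead_append_injective (u : List α) :
    Function.Injective (List.modifyHead (u ++ ·)) := by
  rintro (_ | ⟨b, B⟩) (_ | ⟨c, C⟩) h <;> simp_all

lemma IsBlockSeq.cons_ne_modifyHead_append {u : List α} {B C : List (List α)}
    (hB : IsBlockSeq P B) (hC : IsBlockSeq P C) : u :: B ≠ C.modifyHead (u ++ ·) := by
  match C, hC with
  | [c], _ => simp [hB.1]
  | c :: e :: C, hC => simp [(isBlockSeq_cons_cons.1 hC).1.1]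

lemma mem_splittings_append_iff (hP : ∀ a b, P a → (P (a ++ b) ↔ P b)) {u v : List α}
    (hu : u ≠ []) (hPu : P u) (hmin : ∀ q, q <+: u → q ≠ [] → P q → q = u)
    {B : List (List α)} :
    B ∈ splittings P (u ++ v) ↔
      ∃ C ∈ splittings P v, u :: C = B ∨ C.modifyHead (u ++ ·) = B := by
  simp only [mem_splittings]
  constructor
  · rintro ⟨hB, hflat⟩
    match B, hB with
    | [b], _ => exact ⟨[v], ⟨isBlockSeq_singleton v, by simp⟩, Or.inr (by simpa using hflat.symm)⟩
    | b :: c :: C, hB =>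
      obtain ⟨⟨hb, hPb⟩, hC⟩ := isBlockSeq_cons_cons.1 hB
      obtain ⟨w, rfl⟩ : u <+: b := by
        have hbuv : b <+: u ++ v := ⟨_, hflat⟩
        rcases List.prefix_or_prefix_of_prefix hbuv (List.prefix_append u v) with hbu | hub
        · exact hmin b hbu hb hPb ▸ List.prefix_rfl
        · exact hub
      have hflat' : w ++ (c :: C).flatten = v := by simpa using hflat
      by_cases hw : w = []
      · exact ⟨c :: C, ⟨hC, by simpa [hw] using hflat'⟩, Or.inl (by simp [hw])⟩
      · exact ⟨w :: c :: C, ⟨hC.cons hw ((hP u w hPu).1 hPb), hflat'⟩, Or.inr rfl⟩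
  · rintro ⟨C, ⟨hC, rfl⟩, rfl | rfl⟩
    · exact ⟨hC.cons hu hPu, rfl⟩
    · obtain ⟨c, C, rfl⟩ := List.exists_cons_of_ne_nil hC.1
      exact ⟨hC.modifyHead_append hP hPu, by simp⟩

lemma sum_splittings_append_eq_zero (hP : ∀ a b, P a → (P (a ++ b) ↔ P b)) {u : List α}
    (hu : u ≠ []) (hPu : P u) (hmin : ∀ q, q <+: u → q ≠ [] → P q → q = u) (v : List α) :
    ∑ B ∈ splittings P (u ++ v), (-1 : ℤ) ^ (B.length + 1) = 0 := by
  classical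
  have splittings_eq : splittings P (u ++ v) =
      (splittings P v).image (u :: ·) ∪ (splittings P v).image (List.modifyHead (u ++ ·)) := by
    ext B
    simp only [mem_splittings_append_iff hP hu hPu hmin, Finset.mem_union, Finset.mem_image,
      ← exists_or, ← and_or_left]
  have disjoint_images : Disjoint ((splittings P v).image (u :: ·))
      ((splittings P v).image (List.modifyHead (u ++ ·))) := by
    simp only [Finset.disjoint_left, Finset.mem_image, not_exists, not_and]
    rintro _ ⟨B, hB, rfl⟩ C hC hCB
    exact (mem_splittings.1 hB).1.cons_ne_modifyHead_append (mem_splittings.1 hC).1 hCB.symm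
  rw [splittings_eq, Finset.sum_union disjoint_images,
    Finset.sum_image List.cons_injective.injOn,
    Finset.sum_image (modifyHead_append_injective u).injOn, ← Finset.sum_add_distrib]
  exact Finset.sum_eq_zero fun B _ => by simp [pow_succ]

open Classical in
lemma sum_splittings (hP : ∀ a b, P a → (P (a ++ b) ↔ P b)) (d : List α) :
    ∑ B ∈ splittings P d, (-1 : ℤ) ^ (B.length + 1) =
      if ∀ p, p <+: d → p ≠ [] → ¬ P p then 1 else 0 := by
  split_ifs with hd
  · simp [splittings_eq_singleton hd]
  · push Not at hd
    obtain ⟨p, hpd, hp, hPp⟩ := hd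
    obtain ⟨u, v, rfl, hu, hPu, hmin⟩ := exists_shortest_prefix hpd hp hPp
    exact sum_splittings_append_eq_zero hP hu hPu hmin v

end Splittings

section Rearrangements

variable {α : Type*} {P : List α → Prop}

lemma isBlockSeq_congr_of_forall₂_perm (hP : ∀ a b, a.Perm b → (P a ↔ P b))
    {A B : List (List α)} (h : List.Forall₂ List.Perm B A) :
    IsBlockSeq P B ↔ IsBlockSeq P A := by
  induction h with
  | nil => rfl
  | cons hba hBA ih =>
    cases hBA with
    | nil => simp only [isBlockSeq_singleton]
    | cons =>
      rw [isBlockSeq_cons_cons, isBlockSeq_cons_cons, ih, hP _ _ hba,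
        ← List.length_pos_iff, ← List.length_pos_iff, hba.length_eq]

variable [DecidableEq α]

/-- The sequences of blocks obtained from `A` by rearranging every block. -/
def blockwiseRearrangements : List (List α) → Finset (List (List α))
  | [] => {[]}
  | a :: A => Finset.image₂ List.cons a.permutations.toFinset (blockwiseRearrangements A)

lemma mem_blockwiseRearrangements {A B : List (List α)} :
    B ∈ blockwiseRearrangements A ↔ List.Forall₂ List.Perm B A := by
  induction A generalizing B with
  | nil => simp [blockwiseRearrangements]
  | cons a A ih => cases B <;> simp [blockwiseRearrangements, Finset.mem_image₂, ih]

lemma card_blockwiseRearrangements (A : List (List α)) :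
    (blockwiseRearrangements A).card =
      (A.map fun a => a.permutations.dedup.length).prod := by
  induction A with
  | nil => rfl
  | cons a A ih =>
    rw [blockwiseRearrangements, Finset.card_image₂ (fun _ _ => by simp), ih,
      List.card_toFinset, List.map_cons, List.prod_cons]

/-- The block sequences all of whose blocks except possibly the last are nonempty and satisfy `P`,
and whose concatenation is a rearrangement of `l`. -/
def permSplittings (P : List α → Prop) (l : List α) : Finset (List (List α)) :=
  l.permutations.toFinset.biUnion (splittings P)

@[simp]
lemma mem_permSplittings {l : List α} {B : List (List α)} :
    B ∈ permSplittings P l ↔ IsBlockSeq P B ∧ B.flatten.Perm l := by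
  simp [permSplittings, and_comm]

lemma mem_permSplittings_congr (hP : ∀ a b, a.Perm b → (P a ↔ P b)) {l : List α}
    {A B : List (List α)} (h : List.Forall₂ List.Perm B A) :
    B ∈ permSplittings P l ↔ A ∈ permSplittings P l := by
  rw [mem_permSplittings, mem_permSplittings, isBlockSeq_congr_of_forall₂_perm hP h,
    (List.Perm.flatten_congr h).congr_left]

open Classical in
lemma sum_permSplittings (hP : ∀ a b, P a → (P (a ++ b) ↔ P b)) (l : List α) :
    ∑ B ∈ permSplittings P l, (-1 : ℤ) ^ (B.length + 1) =
      ({d ∈ l.permutations.toFinset | ∀ p, p <+: d → p ≠ [] → ¬ P p} : Finset (List α)).card := by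
  rw [permSplittings, Finset.sum_biUnion]
  · simp only [sum_splittings hP, Finset.sum_boole]
  · intro d _ e _ hde
    refine Finset.disjoint_left.2 fun B hBd hBe => hde ?_
    exact (mem_splittings.1 hBd).2.symm.trans (mem_splittings.1 hBe).2

end Rearrangements

section Sorting

variable {α : Type*} [LinearOrder α] {P : List α → Prop}

/-- Sorts every block of `B` into weakly decreasing order. -/
def sortBlocks (B : List (List α)) : List (List α) := B.map (List.insertionSort (· ≥ ·))

lemma forall₂_perm_sortBlocks (B : List (List α)) :
    List.Forall₂ List.Perm B (sortBlocks B) := by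
  rw [sortBlocks, List.forall₂_map_right_iff, List.forall₂_same]
  exact fun b _ => (List.perm_insertionSort _ b).symm

lemma sortBlocks_eq_iff {A B : List (List α)} (hA : ∀ a ∈ A, a.Pairwise (· ≥ ·)) :
    sortBlocks B = A ↔ List.Forall₂ List.Perm B A := by
  refine ⟨fun h => h ▸ forall₂_perm_sortBlocks B, fun h => ?_⟩
  induction h with
  | nil => rfl
  | @cons b a _ _ hba _ ih =>
    rw [List.forall_mem_cons] at hA
    have insertionSort_eq : b.insertionSort (· ≥ ·) = a :=
      ((List.perm_insertionSort _ b).trans hba).eq_of_pairwise' (List.pairwise_insertionSort _ b)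
        hA.1
    rw [sortBlocks, List.map_cons, insertionSort_eq, ← sortBlocks, ih hA.2]

lemma pairwise_of_mem_sortBlocks {a : List α} {B : List (List α)} (ha : a ∈ sortBlocks B) :
    a.Pairwise (· ≥ ·) := by
  obtain ⟨b, -, rfl⟩ := List.mem_map.1 ha
  exact List.pairwise_insertionSort _ b

lemma mem_image_sortBlocks (hP : ∀ a b, a.Perm b → (P a ↔ P b)) {l : List α}
    {A : List (List α)} :
    A ∈ (permSplittings P l).image sortBlocks ↔
      A ∈ permSplittings P l ∧ ∀ a ∈ A, a.Pairwise (· ≥ ·) := by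
  rw [Finset.mem_image]
  constructor
  · rintro ⟨B, hB, rfl⟩
    exact ⟨(mem_permSplittings_congr hP (forall₂_perm_sortBlocks B)).1 hB,
      fun _ => pairwise_of_mem_sortBlocks⟩
  · rintro ⟨hA, hsorted⟩
    exact ⟨A, hA, (sortBlocks_eq_iff hsorted).2 (List.forall₂_same.2 fun a _ => List.Perm.refl a)⟩

lemma sum_image_sortBlocks (hP : ∀ a b, a.Perm b → (P a ↔ P b)) (l : List α) :
    ∑ A ∈ (permSplittings P l).image sortBlocks,
        (-1 : ℤ) ^ (A.length + 1) * ((blockwiseRearrangements A).card : ℤ) =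
      ∑ B ∈ permSplittings P l, (-1 : ℤ) ^ (B.length + 1) := by
  refine Finset.sum_image' _ fun C hC => ?_
  have fiber_eq : {B ∈ permSplittings P l | sortBlocks B = sortBlocks C} =
      blockwiseRearrangements (sortBlocks C) := by
    ext B
    rw [Finset.mem_filter, mem_blockwiseRearrangements,
      sortBlocks_eq_iff fun _ => pairwise_of_mem_sortBlocks, and_iff_right_iff_imp]
    intro hBC
    rwa [mem_permSplittings_congr hP hBC,
      ← mem_permSplittings_congr hP (forall₂_perm_sortBlocks C)]
  have length_eq : ∀ B ∈ blockwiseRearrangements (sortBlocks C),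
      B.length = (sortBlocks C).length :=
    fun B hB => (mem_blockwiseRearrangements.1 hB).length_eq
  rw [fiber_eq, Finset.sum_congr rfl fun B hB => by rw [length_eq B hB], Finset.sum_const,
    nsmul_eq_mul, mul_comm]

end Sorting

lemma forall_take_iff_forall_prefix {α : Type*} {P : List α → Prop} {d : List α} :
    (∀ j < d.length, ¬ P (d.take (j + 1))) ↔ ∀ p, p <+: d → p ≠ [] → ¬ P p := by
  constructor
  · rintro h p hpd hp
    have length_pos := List.length_pos_iff.2 hp
    have not_take := h (p.length - 1) (by have := hpd.length_le; omega)
    rwa [Nat.sub_add_cancel length_pos, ← List.prefix_iff_eq_take.1 hpd] at not_take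
  · intro h j hj
    refine h _ (List.take_prefix _ _) (List.length_pos_iff.1 ?_)
    rw [List.length_take]
    omega

open Classical in
lemma numCompM_eq_card (m : ℕ) (l : List ℕ) :
    numCompM m l = ({d ∈ l.permutations.toFinset |
      ∀ p, p <+: d → p ≠ [] → ¬ m ∣ p.sum} : Finset (List ℕ)).card := by
  rw [numCompM, ← List.toFinset_card_of_nodup ((List.nodup_dedup _).filter _)]
  congr 1
  ext d
  simp [← forall_take_iff_forall_prefix (P := (m ∣ List.sum ·))]

lemma cAprod_eq_card (A : List (List ℕ)) : cAprod A = (blockwiseRearrangements A).card :=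
  (card_blockwiseRearrangements A).symm

lemma wmem_iff {m : ℕ} {l : List ℕ} (hl : ∀ x ∈ l, 0 < x) {A : List (List ℕ)} :
    Wmem m l A ↔
      A ∈ permSplittings (m ∣ List.sum ·) l ∧ ∀ a ∈ A, a.Pairwise (· ≥ ·) := by
  rw [mem_permSplittings]
  constructor
  · rintro ⟨hA, hpart, hblocks, hperm⟩
    exact ⟨⟨⟨hA, hblocks⟩, hperm⟩, fun a ha => (hpart a ha).1⟩
  · rintro ⟨⟨⟨hA, hblocks⟩, hperm⟩, hsorted⟩
    refine ⟨hA, fun a ha => ⟨hsorted a ha, fun x hx => hl x ?_⟩, hblocks, hperm⟩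
    exact hperm.subset (List.mem_flatten_of_mem ha hx)

theorem stmt7 {m : ℕ} (hm : 0 < m) (lam : List ℕ) (hlam : IsPartitionL lam) :
    (numCompM m lam : ℤ) =
      ∑ᶠ A ∈ {A : List (List ℕ) | Wmem m lam A},
        (-1 : ℤ) ^ (A.length + 1) * (cAprod A : ℤ) := by
  have dvd_sum_perm (a b : List ℕ) (h : a.Perm b) : m ∣ a.sum ↔ m ∣ b.sum := by rw [h.sum_eq]
  have dvd_sum_append (a b : List ℕ) (ha : m ∣ a.sum) : m ∣ (a ++ b).sum ↔ m ∣ b.sum := by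
    rw [List.sum_append, Nat.dvd_add_right ha]
  have setOf_wmem : {A | Wmem m lam A} =
      ↑((permSplittings (m ∣ List.sum ·) lam).image sortBlocks) :=
    Set.ext fun _ => (wmem_iff hlam.2).trans (mem_image_sortBlocks dvd_sum_perm).symm
  rw [setOf_wmem, finsum_mem_coe_finset]
  simp only [cAprod_eq_card]
  rw [sum_image_sortBlocks dvd_sum_perm, sum_permSplittings dvd_sum_append, numCompM_eq_card]
end
end

section
/- Let m be a positive integer and λ a partition. Then c_λ = ∑ c_δ · c_μ^(m), where the sum runs over all pairs (δ, μ) of partitions (δ and μ possibly empty) such that the multiset of all parts of δ and μ together equals the multiset of parts of λ and m divides |δ|. -/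
noncomputable section

/-!
Cut a word at the end of its longest prefix of weight zero. The part before the cut is an arbitrary
word of weight zero, and the part after it has no nonempty prefix of weight zero; conversely, any
two such words concatenate to a word that is cut exactly where they meet. Classifying the words with
a given multiset of letters by the letters of their two parts gives the identity for weights in any
commutative monoid; for compositions, the weight of a part is its class in `ZMod m`.
-/

section ZeroFree

variable {α G : Type*} [AddMonoid G] {w : α → G}

/-- A word is zero-free for the weight `w` if none of its nonempty prefixes has total weight zero.
For the weight `ℕ → ZMod m` this is the condition on partial sums that defines `c_λ^(m)`. -/
def ZeroFree (w : α → G) (x : List α) : Prop := ∀ p, p <+: x → p ≠ [] → (p.map w).sum ≠ 0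

theorem zeroFree_nil (w : α → G) : ZeroFree w [] :=
  fun _ hp hne ↦ absurd (List.prefix_nil.mp hp) hne

theorem exists_append_zeroFree (w : α → G) (x : List α) :
    ∃ b g, b ++ g = x ∧ (b.map w).sum = 0 ∧ ZeroFree w g := by
  induction x using List.reverseRecOn with
  | nil => exact ⟨[], [], rfl, rfl, zeroFree_nil w⟩
  | append_singleton x a ih =>
    obtain ⟨b, g, rfl, hb, hg⟩ := ih
    by_cases h : ((g ++ [a]).map w).sum = 0
    · refine ⟨b ++ (g ++ [a]), [], by simp, ?_, zeroFree_nil w⟩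
      rw [List.map_append, List.sum_append, hb, h, add_zero]
    · refine ⟨b, g ++ [a], (List.append_assoc ..).symm, hb, fun p hp hne ↦ ?_⟩
      rcases List.prefix_concat_iff.mp hp with rfl | hpg
      · exact h
      · exact hg p hpg hne

theorem ZeroFree.eq_nil_of_append {b a g : List α} (hg : ZeroFree w (a ++ g))
    (hb : (b.map w).sum = 0) (hba : ((b ++ a).map w).sum = 0) : a = [] := by
  by_contra ha
  refine hg a (List.prefix_append a g) ha ?_
  simpa [hb] using hba

theorem ZeroFree.append_inj {b g b' g' : List α} (hg : ZeroFree w g) (hg' : ZeroFree w g')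
    (hb : (b.map w).sum = 0) (hb' : (b'.map w).sum = 0) (h : b ++ g = b' ++ g') :
    b = b' ∧ g = g' := by
  rcases List.append_eq_append_iff.mp h with ⟨a, rfl, rfl⟩ | ⟨a, rfl, rfl⟩
  · simp [hg.eq_nil_of_append hb hb']
  · simp [hg'.eq_nil_of_append hb' hb]

end ZeroFree

section Arrangements

variable {α G : Type*} [DecidableEq α]

/-- The words whose multiset of letters is `s`, each listed once (`Multiset.lists` repeats a word
when `s` has repeated letters). For `s` the parts of `λ` these are the compositions of type `λ`. -/
def arrangements (s : Multiset α) : Finset (List α) := s.lists.toFinset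

open Classical in
/-- The arrangements of `s` that are zero-free for the weight `w`. -/
def zeroFreeArrangements [AddMonoid G] (w : α → G) (s : Multiset α) : Finset (List α) :=
  {x ∈ arrangements s | ZeroFree w x}

theorem mem_arrangements {s : Multiset α} {x : List α} : x ∈ arrangements s ↔ ↑x = s := by
  simp [arrangements, eq_comm]

theorem mem_zeroFreeArrangements [AddMonoid G] {w : α → G} {s : Multiset α} {x : List α} :
    x ∈ zeroFreeArrangements w s ↔ ↑x = s ∧ ZeroFree w x := by
  simp [zeroFreeArrangements, mem_arrangements]

theorem stmt8_general [AddCommMonoid G] [DecidableEq G] (w : α → G) (s : Multiset α) :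
    (arrangements s).card =
      ∑ q ∈ s.antidiagonal.toFinset with (q.1.map w).sum = 0,
        (arrangements q.1).card * (zeroFreeArrangements w q.2).card := by
  simp only [← Finset.card_product]
  rw [← Finset.card_sigma]
  symm
  refine Finset.card_bij (fun p _ ↦ p.2.1 ++ p.2.2) ?mapsTo ?injective ?surjective <;>
    simp only [Sigma.forall, Prod.forall, Finset.mem_sigma, Finset.mem_filter,
      Multiset.mem_toFinset, Multiset.mem_antidiagonal, Finset.mem_product, mem_arrangements,
      mem_zeroFreeArrangements]
  case mapsTo =>
    rintro _ _ b g ⟨⟨rfl, -⟩, rfl, rfl, -⟩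
    rfl
  case injective =>
    rintro _ _ b g ⟨⟨-, hb⟩, rfl, rfl, hg⟩ _ _ b' g' ⟨⟨-, hb'⟩, rfl, rfl, hg'⟩ h
    obtain ⟨rfl, rfl⟩ := hg.append_inj hg' (by simpa using hb) (by simpa using hb') h
    rfl
  case surjective =>
    rintro x rfl
    obtain ⟨b, g, rfl, hb, hg⟩ := exists_append_zeroFree w x
    exact ⟨⟨(b, g), (b, g)⟩,
      by simpa [mem_arrangements, mem_zeroFreeArrangements, hg] using hb, rfl⟩

end Arrangements

section Partitions

variable {m : ℕ}

theorem sum_map_natCast_zmod_eq_zero_iff (l : List ℕ) :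
    (l.map ((↑) : ℕ → ZMod m)).sum = 0 ↔ m ∣ l.sum := by
  rw [← Nat.cast_list_sum, ZMod.natCast_eq_zero_iff]

theorem zeroFree_natCast_zmod_iff (x : List ℕ) :
    ZeroFree ((↑) : ℕ → ZMod m) x ↔ ∀ j < x.length, ¬ m ∣ (x.take (j + 1)).sum := by
  simp only [ZeroFree, ne_eq, sum_map_natCast_zmod_eq_zero_iff]
  constructor
  · intro h j hj
    exact h _ (List.take_prefix _ _) (List.ne_nil_of_length_pos (by rw [List.length_take]; omega))
  · intro h p hp hne
    have hpos : 0 < p.length := List.length_pos_iff.mpr hne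
    have hle : p.length ≤ x.length := hp.length_le
    have := h (p.length - 1) (by omega)
    rwa [Nat.sub_add_cancel hpos, ← List.prefix_iff_eq_take.mp hp] at this

theorem numComp_eq_card_arrangements (l : List ℕ) :
    numComp l = (arrangements (l : Multiset ℕ)).card :=
  (List.card_toFinset _).symm

theorem numCompM_eq_card_zeroFreeArrangements (m : ℕ) (l : List ℕ) :
    numCompM m l = (zeroFreeArrangements ((↑) : ℕ → ZMod m) ↑l).card := by
  rw [numCompM, ← List.toFinset_card_of_nodup ((List.nodup_dedup _).filter _)]
  congr 1
  ext x
  simp [mem_zeroFreeArrangements, zeroFree_natCast_zmod_iff]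

theorem isPartitionL_sort {s : Multiset ℕ} (hs : ∀ x ∈ s, 0 < x) :
    IsPartitionL (s.sort (· ≥ ·)) :=
  ⟨s.pairwise_sort _, fun x hx ↦ hs x ((s.mem_sort _).mp hx)⟩

theorem IsPartitionL.sort_coe {l : List ℕ} (hl : IsPartitionL l) :
    (l : Multiset ℕ).sort (· ≥ ·) = l :=
  List.mergeSort_eq_self _ hl.1

theorem bijOn_coe_partition_pairs {l : List ℕ} (hl : ∀ x ∈ l, 0 < x)
    (P : Multiset ℕ × Multiset ℕ → Prop) :
    Set.BijOn (fun q : List ℕ × List ℕ ↦ ((q.1, q.2) : Multiset ℕ × Multiset ℕ))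
      {q | IsPartitionL q.1 ∧ IsPartitionL q.2 ∧ (q.1 ++ q.2).Perm l ∧ P (q.1, q.2)}
      {q | q.1 + q.2 = l ∧ P q} := by
  refine Set.InvOn.bijOn (f' := fun q ↦ (q.1.sort (· ≥ ·), q.2.sort (· ≥ ·))) ⟨?_, ?_⟩ ?_ ?_
  · rintro ⟨a, b⟩ ⟨ha, hb, -, -⟩
    exact Prod.ext ha.sort_coe hb.sort_coe
  · rintro ⟨s, t⟩ -
    simp only [Multiset.sort_eq]
  · rintro ⟨a, b⟩ ⟨-, -, hab, hP⟩
    exact ⟨Multiset.coe_eq_coe.mpr hab, hP⟩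
  · rintro ⟨s, t⟩ ⟨hst, hP⟩
    have hpos : ∀ x ∈ s + t, 0 < x := fun x hx ↦ hl x (by simpa [hst] using hx)
    refine ⟨isPartitionL_sort fun x hx ↦ hpos x (Multiset.mem_add.mpr (.inl hx)),
      isPartitionL_sort fun x hx ↦ hpos x (Multiset.mem_add.mpr (.inr hx)), ?_, ?_⟩
    · rw [← Multiset.coe_eq_coe, ← Multiset.coe_add, Multiset.sort_eq, Multiset.sort_eq, hst]
    · rwa [Multiset.sort_eq, Multiset.sort_eq]

theorem finsum_partition_pairs_eq_sum_antidiagonal {M : Type*} [AddCommMonoid M] {l : List ℕ}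
    (hl : ∀ x ∈ l, 0 < x)
    (P : Multiset ℕ × Multiset ℕ → Prop) [DecidablePred P] (F : Multiset ℕ × Multiset ℕ → M) :
    ∑ᶠ q ∈ {q : List ℕ × List ℕ | IsPartitionL q.1 ∧ IsPartitionL q.2 ∧
        (q.1 ++ q.2).Perm l ∧ P (q.1, q.2)}, F (q.1, q.2) =
      ∑ q ∈ (l : Multiset ℕ).antidiagonal.toFinset with P q, F q := by
  rw [finsum_mem_eq_of_bijOn _ (bijOn_coe_partition_pairs hl P) fun _ _ ↦ rfl,
    ← finsum_mem_coe_finset]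
  simp only [Finset.coe_filter, Multiset.mem_toFinset, Multiset.mem_antidiagonal]

end Partitions

theorem stmt8 {m : ℕ} (hm : 0 < m) (lam : List ℕ) (hlam : IsPartitionL lam) :
    numComp lam =
      ∑ᶠ q ∈ {q : List ℕ × List ℕ | IsPartitionL q.1 ∧ IsPartitionL q.2 ∧
          List.Perm (q.1 ++ q.2) lam ∧ m ∣ q.1.sum},
        numComp q.1 * numCompM m q.2 := by
  rw [numComp_eq_card_arrangements, stmt8_general ((↑) : ℕ → ZMod m),
    ← finsum_partition_pairs_eq_sum_antidiagonal hlam.2]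
  simp only [numComp_eq_card_arrangements, numCompM_eq_card_zeroFreeArrangements,
    Multiset.map_coe, Multiset.sum_coe, sum_map_natCast_zmod_eq_zero_iff]
end
end

section
/- Let m be a positive integer and β = (β_1,...,β_s) a composition. Write β_i = mη_i + r_i with integers 0 ≤ r_i ≤ m−1, let r = r_1 + ··· + r_s, and let μ be the partition obtained by arranging the nonzero values among η_1,...,η_s in weakly decreasing order. Then c^(m)_{β;((1^r), mμ)} = 1, where (1^r) denotes the partition with r parts equal to 1 (the empty partition if r = 0). -/
noncomputable section

/-!
A tuple in `V(β;((1^r), mμ))` consists of partitions `(1^{k_i})` with `k_i ≡ β_i` modulo `m`, so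
`k_i ≥ r_i` for every `i`. Since `∑ k_i = r = ∑ r_i`, every inequality is an equality and
`((1^{r_1}), …, (1^{r_s}))` is the only tuple. Each of its factors is `1`: the only composition of
type `(1^{r_i})` has partial sums `1, …, r_i < m`.
-/

section List

variable {α β γ M : Type*}

theorem dedup_permutations_replicate [DecidableEq α] (n : ℕ) (a : α) :
    (List.replicate n a).permutations.dedup = [List.replicate n a] := by
  refine List.perm_singleton.1 ?_
  rw [List.perm_ext_iff_of_nodup (List.nodup_dedup _) (List.nodup_singleton _)]
  intro l
  rw [List.mem_dedup, List.mem_permutations, List.perm_replicate, List.mem_singleton]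

theorem flatten_map_replicate (ks : List ℕ) (a : α) :
    (ks.map (List.replicate · a)).flatten = List.replicate ks.sum a := by
  induction ks with
  | nil => rfl
  | cons k ks ih =>
    rw [List.map_cons, List.flatten_cons, ih, List.sum_cons, List.replicate_add]

theorem map_replicate_map_length {L : List (List α)} {a : α}
    (hL : ∀ l ∈ L, ∀ x ∈ l, x = a) : (L.map List.length).map (List.replicate · a) = L := by
  rw [List.map_map]
  exact (List.map_congr_left fun l hl => (List.eq_replicate_length.2 (hL l hl)).symm).trans L.map_id

theorem eq_of_forall₂_le_of_sum_eq [AddCommMonoid M] [PartialOrder M] [IsOrderedCancelAddMonoid M]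
    {l₁ l₂ : List M} (hle : List.Forall₂ (· ≤ ·) l₁ l₂) (hsum : l₁.sum = l₂.sum) : l₁ = l₂ := by
  induction hle with
  | nil => rfl
  | cons hab hle ih =>
    rw [List.sum_cons, List.sum_cons, add_eq_add_iff_eq_and_eq hab hle.sum_le_sum] at hsum
    rw [hsum.1, ih hsum.2]

theorem prod_range_getD [CommMonoid M] (l : List α) (d : α) (f : α → M) :
    ∏ i ∈ Finset.range l.length, f (l.getD i d) = (l.map f).prod := by
  simp [Finset.prod_range, ← List.prod_ofFn]

theorem filter_ne_zero_map_mul_left [MulZeroClass M] [NoZeroDivisors M] [DecidableEq M] {a : M}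
    (ha : a ≠ 0) (l : List M) :
    (l.map (a * ·)).filter (fun x => decide (x ≠ 0)) =
      (l.filter fun x => decide (x ≠ 0)).map (a * ·) := by
  simp [List.filter_map, Function.comp_def, ha]

theorem map_range_getD_getD (f : α → β → γ) {l₁ : List α} {l₂ : List β}
    (h : l₂.length = l₁.length) (d₁ : α) (d₂ : β) :
    ((List.range l₁.length).map fun i => f (l₁.getD i d₁) (l₂.getD i d₂)) =
      List.zipWith f l₁ l₂ := by
  refine List.ext_getElem (by simp [h]) fun i hi _ => ?_
  have hi : i < l₁.length := by simpa using hi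
  simp [hi, h]

theorem forall₂_iff_getD {R : α → β → Prop} {l₁ : List α} {l₂ : List β} (d₁ : α) (d₂ : β) :
    List.Forall₂ R l₁ l₂ ↔
      l₂.length = l₁.length ∧ ∀ i < l₁.length, R (l₁.getD i d₁) (l₂.getD i d₂) := by
  rw [List.forall₂_iff_get, eq_comm]
  refine and_congr_right fun h => forall₂_congr fun i hi => ?_
  simp [hi, h]

end List

theorem epsL_replicate_one (k : ℕ) : epsL (List.replicate k 1) = 1 := by
  simp [epsL]

theorem numCompM_replicate_one {m k : ℕ} (hk : k < m) : numCompM m (List.replicate k 1) = 1 := by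
  have hpartial : ∀ j < (List.replicate k 1).length,
      ¬ m ∣ ((List.replicate k 1).take (j + 1)).sum := by
    intro j hj
    rw [List.length_replicate] at hj
    rw [List.take_replicate, List.sum_replicate, smul_eq_mul, mul_one]
    exact Nat.not_dvd_of_pos_of_lt (by omega) (by omega)
  rw [numCompM, dedup_permutations_replicate, List.filter_singleton, decide_eq_true hpartial]
  rfl

theorem memPnm_replicate_one_iff {n m k : ℕ} :
    MemPnm n m (List.replicate k 1) ↔ k ≤ n ∧ k ≡ n [MOD m] := by
  have hpart : IsPartitionL (List.replicate k 1) := by simp [IsPartitionL, List.pairwise_replicate]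
  simp only [MemPnm, hpart, true_and, List.sum_replicate, smul_eq_mul, mul_one]
  exact and_congr_right fun hk => (Nat.modEq_iff_dvd' hk).symm

theorem mod_le_of_memPnm_replicate_one {n m k : ℕ} (h : MemPnm n m (List.replicate k 1)) :
    n % m ≤ k :=
  (memPnm_replicate_one_iff.1 h).2.symm.trans_le (Nat.mod_le k m)

theorem memPnm_replicate_mod_one (n m : ℕ) : MemPnm n m (List.replicate (n % m) 1) :=
  memPnm_replicate_one_iff.2 ⟨Nat.mod_le n m, Nat.mod_modEq n m⟩

theorem vmem_iff {m : ℕ} {β ξ μ : List ℕ} {L : List (List ℕ)} :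
    Vmem m β ξ μ L ↔
      List.Forall₂ (fun b l => MemPnm b m l) β L ∧
      L.flatten.Perm ξ ∧
      ((List.zipWith (fun b l => b - l.sum) β L).filter fun x => decide (x ≠ 0)).Perm
        (μ.map (m * ·)) := by
  rw [Vmem, forall₂_iff_getD 0 [], and_assoc]
  refine and_congr_right fun hlen => ?_
  rw [map_range_getD_getD (fun b l => b - l.sum) hlen]

/-- The tuple `((1^{r_1}), …, (1^{r_s}))`, where `r_i` is the remainder of `β_i` modulo `m`. It is
the only element of `V(β;((1^r), mμ))`. -/
def residueTuple (m : ℕ) (β : List ℕ) : List (List ℕ) :=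
  (β.map (· % m)).map (List.replicate · 1)

theorem length_residueTuple (m : ℕ) (β : List ℕ) : (residueTuple m β).length = β.length := by
  simp [residueTuple]

theorem flatten_residueTuple (m : ℕ) (β : List ℕ) :
    (residueTuple m β).flatten = List.replicate (β.map (· % m)).sum 1 :=
  flatten_map_replicate _ 1

theorem forall₂_memPnm_residueTuple (m : ℕ) (β : List ℕ) :
    List.Forall₂ (fun b l => MemPnm b m l) β (residueTuple m β) := by
  rw [residueTuple, List.map_map, List.forall₂_map_right_iff, List.forall₂_same]
  exact fun b _ => memPnm_replicate_mod_one b m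

theorem zipWith_sub_sum_residueTuple (m : ℕ) (β : List ℕ) :
    List.zipWith (fun b l => b - l.sum) β (residueTuple m β) = (β.map (· / m)).map (m * ·) := by
  simp [residueTuple, List.zipWith_map_right, List.zipWith_self, Nat.mul_div_self_eq_mod_sub_self]

theorem vmem_residueTuple {m : ℕ} (hm : 0 < m) {β μ : List ℕ}
    (hμ : μ.Perm ((β.map (· / m)).filter fun x => decide (x ≠ 0))) :
    Vmem m β (List.replicate (β.map (· % m)).sum 1) μ (residueTuple m β) := by
  refine vmem_iff.2 ⟨forall₂_memPnm_residueTuple m β, .of_eq (flatten_residueTuple m β), ?_⟩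
  rw [zipWith_sub_sum_residueTuple, filter_ne_zero_map_mul_left hm.ne']
  exact (hμ.map _).symm

theorem eq_residueTuple_of_flatten_perm {m : ℕ} {β : List ℕ} {L : List (List ℕ)}
    (hmem : List.Forall₂ (fun b l => MemPnm b m l) β L)
    (hflat : L.flatten.Perm (List.replicate (β.map (· % m)).sum 1)) : L = residueTuple m β := by
  have hones : (L.map List.length).map (List.replicate · 1) = L :=
    map_replicate_map_length fun l hl x hx =>
      List.eq_of_mem_replicate (hflat.subset (List.mem_flatten_of_mem hl hx))
  have hle : List.Forall₂ (· ≤ ·) (β.map (· % m)) (L.map List.length) := by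
    rw [← hones, List.forall₂_map_right_iff] at hmem
    rw [List.forall₂_map_left_iff]
    exact hmem.imp fun _ _ => mod_le_of_memPnm_replicate_one
  have hsum : (β.map (· % m)).sum = (L.map List.length).sum := by
    rw [← List.length_flatten, hflat.length_eq, List.length_replicate]
  rw [residueTuple, eq_of_forall₂_le_of_sum_eq hle hsum, hones]

theorem setOf_vmem_replicate_one {m : ℕ} (hm : 0 < m) {β μ : List ℕ}
    (hμ : μ.Perm ((β.map (· / m)).filter fun x => decide (x ≠ 0))) :
    {L | Vmem m β (List.replicate (β.map (· % m)).sum 1) μ L} = {residueTuple m β} := by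
  refine Set.eq_singleton_iff_unique_mem.2 ⟨vmem_residueTuple hm hμ, fun L hL => ?_⟩
  obtain ⟨hmem, hflat, -⟩ := vmem_iff.1 hL
  exact eq_residueTuple_of_flatten_perm hmem hflat

theorem epsL_mul_numCompM_of_mem_residueTuple {m : ℕ} (hm : 0 < m) {β l : List ℕ}
    (hl : l ∈ residueTuple m β) : epsL l * (numCompM m l : ℤ) = 1 := by
  rw [residueTuple, List.map_map, List.mem_map] at hl
  obtain ⟨b, -, rfl⟩ := hl
  simp [epsL_replicate_one, numCompM_replicate_one (Nat.mod_lt b hm)]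

theorem stmt9 {m : ℕ} (hm : 0 < m) (β : List ℕ) (hβ : ∀ x ∈ β, 0 < x)
    (r : ℕ) (hr : r = (β.map (· % m)).sum)
    (μ : List ℕ) (hμs : μ.Pairwise (· ≥ ·))
    (hμ : List.Perm μ ((β.map (· / m)).filter fun x => decide (x ≠ 0))) :
    cB m β (List.replicate r 1) μ = 1 := by
  subst hr
  rw [cB, setOf_vmem_replicate_one hm hμ, finsum_mem_singleton, ← length_residueTuple m β,
    prod_range_getD (residueTuple m β) [] fun l => epsL l * (numCompM m l : ℤ)]
  refine List.prod_eq_one fun c hc => ?_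
  obtain ⟨l, hl, rfl⟩ := List.mem_map.1 hc
  exact epsL_mul_numCompM_of_mem_residueTuple hm hl
end
end

section
/- Let m be a positive integer and (α|β) a pair of compositions with |α| + |β| = n. Write β_i = mη_i + r_i with 0 ≤ r_i ≤ m−1, let r = r_1 + ··· + r_{ℓ(β)}, let λ = α∪(1^r), and let μ be the partition obtained by arranging the nonzero values among the η_i in weakly decreasing order. Suppose ξ and θ are partitions with |α| + |ξ| + m|θ| = n such that c^(m)_{β;(ξ,mθ)} ≠ 0 and (λ|mμ) ⊵ (α∪ξ|mθ). Then α∪ξ = λ and θ = μ. -/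
noncomputable section

/-- Dominance order on pairs: `(lam | m·mu) ⊵ (del | m·th)`, i.e. for every `l ≥ 1`,
`∑_{i=1}^l lam_i ≥ ∑_{i=1}^l del_i` and
`|lam| + m·∑_{i=1}^l mu_i ≥ |del| + m·∑_{i=1}^l th_i`. -/
def Dominates (m : ℕ) (lam mu del th : List ℕ) : Prop :=
  ∀ l, 1 ≤ l →
    (del.take l).sum ≤ (lam.take l).sum ∧
    del.sum + m * (th.take l).sum ≤ lam.sum + m * (mu.take l).sum

/-!
Each `|ξ⁽ⁱ⁾|` is congruent to `β_i` modulo `m`, hence at least the residue `r_i`, so `|ξ| ≥ r`.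
Dominance of `α ∪ ξ` by `λ` gives `|ξ| ≤ r`, so every `|ξ⁽ⁱ⁾|` equals `r_i` and the remainders
`β_i - |ξ⁽ⁱ⁾|` are the `m η_i`; this is `θ = μ`. As the totals now agree, dominance also forces
`ℓ(λ) ≤ ℓ(α ∪ ξ)`, that is `r ≤ ℓ(ξ)`, and a partition of `r` with at least `r` parts is `(1^r)`.
-/

theorem map_getD_range {γ δ : Type*} (f : γ → δ) (d : γ) (l : List γ) :
    ((List.range l.length).map fun i => f (l.getD i d)) = l.map f := by
  refine List.ext_getElem (by simp) fun i _ hi => ?_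
  rw [List.length_map] at hi
  simp [hi]

theorem sum_range_getD {γ M : Type*} [AddCommMonoid M] (f : γ → M) (d : γ) (l : List γ) :
    ∑ i ∈ Finset.range l.length, f (l.getD i d) = (l.map f).sum := by
  rw [← map_getD_range f d l]
  rfl

theorem sum_le_sum_of_forall_sum_take_le {l₁ l₂ : List ℕ}
    (h : ∀ k, (l₁.take k).sum ≤ (l₂.take k).sum) : l₁.sum ≤ l₂.sum := by
  have hfull := h (max l₁.length l₂.length)
  rwa [List.take_of_length_le (le_max_left _ _), List.take_of_length_le (le_max_right _ _)] at hfull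

theorem length_le_of_sum_le_sum_take {l : List ℕ} {k : ℕ} (hpos : ∀ x ∈ l, 0 < x)
    (h : l.sum ≤ (l.take k).sum) : l.length ≤ k := by
  have hsplit := List.sum_take_add_sum_drop l k
  have hdrop := List.length_le_sum_of_one_le (l.drop k) fun x hx => hpos x (List.mem_of_mem_drop hx)
  rw [List.length_drop] at hdrop
  omega

theorem eq_replicate_one_of_sum_le_of_le_length {l : List ℕ} {r : ℕ} (hpos : ∀ x ∈ l, 0 < x)
    (hsum : l.sum ≤ r) (hlen : r ≤ l.length) : l = List.replicate r 1 := by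
  have hlen_le := List.length_le_sum_of_one_le l hpos
  refine List.eq_replicate_iff.2 ⟨by omega, fun x hx => ?_⟩
  have herase := List.length_le_sum_of_one_le (l.erase x) fun y hy =>
    hpos y (List.mem_of_mem_erase hy)
  have hsum_erase := List.sum_erase hx
  have hlen_erase := List.length_erase_of_mem hx
  have hx_pos := hpos x hx
  omega

theorem eq_replicate_one_of_forall_sum_take_le {α ξ lam αξ : List ℕ} {r : ℕ}
    (hα : ∀ x ∈ α, 0 < x) (hξ : ∀ x ∈ ξ, 0 < x) (hr : r ≤ ξ.sum)
    (hlam : lam.Perm (α ++ List.replicate r 1)) (hαξ : αξ.Perm (α ++ ξ))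
    (hdom : ∀ k, (αξ.take k).sum ≤ (lam.take k).sum) : ξ = List.replicate r 1 := by
  have hlam_pos : ∀ x ∈ lam, 0 < x := by
    intro x hx
    rcases List.mem_append.1 (hlam.subset hx) with hx | hx
    · exact hα x hx
    · exact (List.eq_of_mem_replicate hx).symm ▸ one_pos
  have hlam_sum : lam.sum = α.sum + r := by simp [hlam.sum_eq]
  have hαξ_sum : αξ.sum = α.sum + ξ.sum := by simp [hαξ.sum_eq]
  have hαξ_le : αξ.sum ≤ lam.sum := sum_le_sum_of_forall_sum_take_le hdom
  have hsum : ξ.sum = r := by omega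
  have hlength : lam.length ≤ αξ.length := by
    refine length_le_of_sum_le_sum_take hlam_pos ?_
    simpa only [hlam_sum, hαξ_sum, hsum, List.take_length] using hdom αξ.length
  rw [hlam.length_eq, hαξ.length_eq] at hlength
  refine eq_replicate_one_of_sum_le_of_le_length hξ hsum.le ?_
  simpa using hlength

theorem filter_ne_zero_map_mul {m : ℕ} (hm : 0 < m) (l : List ℕ) :
    ((l.map (m * ·)).filter fun x => decide (x ≠ 0)) =
      (l.filter fun x => decide (x ≠ 0)).map (m * ·) := by
  rw [List.filter_map]
  congr 1
  exact List.filter_congr fun x _ => by simp [hm.ne']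

theorem Dominates.sum_take_le {m : ℕ} {lam mu del th : List ℕ} (h : Dominates m lam mu del th)
    (k : ℕ) : (del.take k).sum ≤ (lam.take k).sum := by
  rcases k.eq_zero_or_pos with rfl | hk
  · simp
  · exact (h k hk).1

theorem MemPnm.mod_le_sum {n m : ℕ} {μ : List ℕ} (h : MemPnm n m μ) : n % m ≤ μ.sum := by
  have hmod : μ.sum % m = n % m := (Nat.modEq_iff_dvd' h.2.1).2 h.2.2
  exact hmod ▸ Nat.mod_le _ _

theorem exists_vmem_of_cB_ne_zero {m : ℕ} {β ξ θ : List ℕ} (h : cB m β ξ θ ≠ 0) :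
    ∃ L, Vmem m β ξ θ L :=
  let ⟨L, hL, _⟩ := exists_ne_zero_of_finsum_mem_ne_zero h
  ⟨L, hL⟩

namespace Vmem

variable {m : ℕ} {β ξ θ : List ℕ} {L : List (List ℕ)}

theorem pos (h : Vmem m β ξ θ L) : ∀ x ∈ ξ, 0 < x := by
  obtain ⟨hlen, hmem, hflat, -⟩ := h
  intro x hx
  obtain ⟨l, hl, hxl⟩ := List.mem_flatten.1 (hflat.mem_iff.2 hx)
  obtain ⟨i, hi, rfl⟩ := List.mem_iff_getElem.1 hl
  have hpart := (hmem i (hlen ▸ hi)).1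
  rw [List.getD_eq_getElem _ _ hi] at hpart
  exact hpart.2 x hxl

theorem sum_range_sum_getD (h : Vmem m β ξ θ L) :
    ∑ i ∈ Finset.range β.length, (L.getD i []).sum = ξ.sum := by
  obtain ⟨hlen, -, hflat, -⟩ := h
  rw [← hlen, sum_range_getD List.sum, ← List.sum_flatten, hflat.sum_eq]

theorem mod_le_sum_getD (h : Vmem m β ξ θ L) :
    ∀ i ∈ Finset.range β.length, β.getD i 0 % m ≤ (L.getD i []).sum :=
  fun i hi => (h.2.1 i (Finset.mem_range.1 hi)).mod_le_sum

theorem sum_mod_le_sum (h : Vmem m β ξ θ L) : (β.map (· % m)).sum ≤ ξ.sum := by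
  rw [← sum_range_getD (· % m) 0 β, ← h.sum_range_sum_getD]
  exact Finset.sum_le_sum h.mod_le_sum_getD

theorem mod_eq_sum_getD (h : Vmem m β ξ θ L) (hξ : ξ.sum ≤ (β.map (· % m)).sum) :
    ∀ i ∈ Finset.range β.length, β.getD i 0 % m = (L.getD i []).sum := by
  refine (Finset.sum_eq_sum_iff_of_le h.mod_le_sum_getD).1 ?_
  rw [sum_range_getD (· % m), h.sum_range_sum_getD]
  exact le_antisymm h.sum_mod_le_sum hξ

theorem perm_filter_div (h : Vmem m β ξ θ L) (hm : 0 < m) (hξ : ξ.sum ≤ (β.map (· % m)).sum) :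
    θ.Perm ((β.map (· / m)).filter fun x => decide (x ≠ 0)) := by
  have hdiff : ((List.range β.length).map fun i => β.getD i 0 - (L.getD i []).sum) =
      (β.map (· / m)).map (m * ·) := by
    rw [List.map_map, ← map_getD_range _ 0 β]
    refine List.map_congr_left fun i hi => ?_
    have hmod := h.mod_eq_sum_getD hξ i (Finset.mem_range.2 (List.mem_range.1 hi))
    have hdivmod := Nat.div_add_mod (β.getD i 0) m
    simp only [Function.comp_apply]
    omega
  have hθ := h.2.2.2
  rw [hdiff, filter_ne_zero_map_mul hm] at hθ
  exact ((List.map_perm_map_iff fun _ _ => Nat.eq_of_mul_eq_mul_left hm).1 hθ).symm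

end Vmem

theorem stmt10_general {m : ℕ} (hm : 0 < m) {α β lam mu ξ θ αξ : List ℕ} {L : List (List ℕ)}
    (hα : ∀ x ∈ α, 0 < x)
    (hlams : lam.Pairwise (· ≥ ·))
    (hlam : lam.Perm (α ++ List.replicate (β.map (· % m)).sum 1))
    (hmus : mu.Pairwise (· ≥ ·))
    (hmu : mu.Perm ((β.map (· / m)).filter fun x => decide (x ≠ 0)))
    (hθ : θ.Pairwise (· ≥ ·)) (hV : Vmem m β ξ θ L)
    (hαξs : αξ.Pairwise (· ≥ ·)) (hαξ : αξ.Perm (α ++ ξ))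
    (hdom : ∀ k, (αξ.take k).sum ≤ (lam.take k).sum) :
    αξ = lam ∧ θ = mu := by
  have hξ : ξ = List.replicate (β.map (· % m)).sum 1 :=
    eq_replicate_one_of_forall_sum_take_le hα hV.pos hV.sum_mod_le_sum hlam hαξ hdom
  constructor
  · rw [hξ] at hαξ
    exact (hαξ.trans hlam.symm).eq_of_pairwise' hαξs hlams
  · have hξ_sum : ξ.sum ≤ (β.map (· % m)).sum := by simp [hξ]
    exact ((hV.perm_filter_div hm hξ_sum).trans hmu.symm).eq_of_pairwise' hθ hmus

theorem stmt10 {m : ℕ} (hm : 0 < m) {n : ℕ} (α β : List ℕ)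
    (hα : ∀ x ∈ α, 0 < x) (hβ : ∀ x ∈ β, 0 < x) (hn : α.sum + β.sum = n)
    (r : ℕ) (hr : r = (β.map (· % m)).sum)
    (lam : List ℕ) (hlams : lam.Pairwise (· ≥ ·))
    (hlam : List.Perm lam (α ++ List.replicate r 1))
    (mu : List ℕ) (hmus : mu.Pairwise (· ≥ ·))
    (hmu : List.Perm mu ((β.map (· / m)).filter fun x => decide (x ≠ 0)))
    (ξ θ : List ℕ) (hξ : IsPartitionL ξ) (hθ : IsPartitionL θ)
    (hsum : α.sum + ξ.sum + m * θ.sum = n)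
    (hc : cB m β ξ θ ≠ 0)
    (αξ : List ℕ) (hαξs : αξ.Pairwise (· ≥ ·)) (hαξ : List.Perm αξ (α ++ ξ))
    (hdom : Dominates m lam mu αξ θ) :
    αξ = lam ∧ θ = mu := by
  subst hr
  obtain ⟨L, hV⟩ := exists_vmem_of_cB_ne_zero hc
  exact stmt10_general hm hα hlams hlam hmus hmu hθ.1 hV hαξs hαξ hdom.sum_take_le
end
end
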